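/- arXiv:math/0409554 — 3 statements merged into one kernel-verified Lean document; each statement's English description precedes it below -/
import Mathlib

section
/- Let n ≥ 1 be an integer and a > −1 a real number. Define h(s) := (d/ds) log ∫_{[s,∞)^n} Δ_n(z)² ∏_{i=1}^n (z_i − s)^a e^{−z_i²} dz (the integral being finite and positive for every real s, and s ↦ log of it smooth). Then h satisfies the Painlevé IV type equation h‴(s) + 6 h′(s)² − 4(s² + 2(a − n)) h′(s) + 4s·h(s) − 8an = 0 for all s ∈ ℝ. -/
open MeasureTheory Filter Real
open scoped BigOperators Topology

noncomputable section

/-- Vandermonde determinant `Δ_n(z) = ∏_{i<j} (z_i - z_j)`. -/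
def vdm {n : ℕ} (z : Fin n → ℝ) : ℝ :=
  ∏ i : Fin n, ∏ j ∈ Finset.Ioi i, (z i - z j)

/-- The matrix-model integral `∫_{[s,∞)^n} Δ_n(z)² ∏ (z_i − s)^a e^{−z_i²} dz`. -/
def matInt4 (n : ℕ) (a : ℝ) (s : ℝ) : ℝ :=
  ∫ z in Set.univ.pi fun _ : Fin n => Set.Ici s,
    vdm z ^ 2 * ∏ i, ((z i - s) ^ a * Real.exp (-(z i ^ 2)))

/-- Its logarithmic derivative `h(s)`. -/
def hlog4 (n : ℕ) (a : ℝ) (s : ℝ) : ℝ :=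
  deriv (fun t => Real.log (matInt4 n a t)) s

namespace OP
open Polynomial

variable {A : Type*} [CommRing A]

/-- Monic orthogonal polynomials, shifted by one. -/
def Q (L : A[X] →ₗ[A] A) : ℕ → A[X]
  | 0 => 0
  | 1 => 1
  | k + 2 => (X - C (Ring.inverse (L (Q L (k+1) * Q L (k+1))) * L (X * (Q L (k+1) * Q L (k+1))))) * Q L (k+1)
      - C (Ring.inverse (L (Q L k * Q L k)) * L (Q L (k+1) * Q L (k+1))) * Q L k

def H (L : A[X] →ₗ[A] A) (k : ℕ) : A := L (Q L (k+1) * Q L (k+1))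
def al (L : A[X] →ₗ[A] A) (k : ℕ) : A := Ring.inverse (H L k) * L (X * (Q L (k+1) * Q L (k+1)))
def be (L : A[X] →ₗ[A] A) (k : ℕ) : A := Ring.inverse (L (Q L k * Q L k)) * H L k

theorem Q_zero (L : A[X] →ₗ[A] A) : Q L 0 = 0 := by rw [Q]
theorem Q_one (L : A[X] →ₗ[A] A) : Q L 1 = 1 := by rw [Q]

theorem Q_rec (L : A[X] →ₗ[A] A) (k : ℕ) :
    X * Q L (k+1) = Q L (k+2) + C (al L k) * Q L (k+1) + C (be L k) * Q L k := by
  rw [Q, al, be, H]; ring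

attribute [irreducible] Q

theorem be_zero (L : A[X] →ₗ[A] A) : be L 0 = 0 := by
  simp [be, Q_zero]

theorem Q_coeff (L : A[X] →ₗ[A] A) (k : ℕ) :
    (Q L (k+1)).coeff k = 1 ∧ ∀ j, k < j → (Q L (k+1)).coeff j = 0 := by
  induction k using Nat.strong_induction_on with
  | _ k ih =>
    match k with
    | 0 => 
      refine ⟨by simp [Q_one], fun j hj => ?_⟩
      simp only [zero_add, Q_one]
      rw [coeff_one, if_neg (by omega)]
    | k + 1 =>
      have h1 := ih k (by omega)
      have h2 : ∀ j, k ≤ j → (Q L k).coeff j = 0 := by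
        intro j hj
        match k with
        | 0 => simp [Q_zero]
        | k + 1 => exact (ih k (by omega)).2 j hj
      have e : Q L (k+2) = X * Q L (k+1) - C (al L k) * Q L (k+1) - C (be L k) * Q L k := by
        rw [Q_rec]; ring
      rw [e]
      constructor
      · simp [coeff_X_mul, coeff_C_mul, h1.1, h1.2 (k+1) (by omega), h2 (k+1) (by omega)]
      · intro j hj
        obtain ⟨j, rfl⟩ : ∃ i, j = i + 1 := ⟨j - 1, by omega⟩
        simp [coeff_X_mul, coeff_C_mul, h1.2 j (by omega), h1.2 (j+1) (by omega), h2 (j+1) (by omega)]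

theorem Q_coeff' (L : A[X] →ₗ[A] A) (k : ℕ) : ∀ j, k ≤ j → (Q L k).coeff j = 0 := by
  match k with
  | 0 => simp [Q_zero]
  | k + 1 => intro j hj; exact (Q_coeff L k).2 j hj

theorem Q_natDegree [Nontrivial A] (L : A[X] →ₗ[A] A) (k : ℕ) : (Q L (k+1)).natDegree = k := by
  apply natDegree_eq_of_le_of_coeff_ne_zero
  · rw [natDegree_le_iff_coeff_eq_zero]
    exact fun j hj => (Q_coeff L k).2 j hj
  · rw [(Q_coeff L k).1]; exact one_ne_zero

theorem Q_monic [Nontrivial A] (L : A[X] →ₗ[A] A) (k : ℕ) : (Q L (k+1)).Monic := by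
  rw [Monic, leadingCoeff, Q_natDegree, (Q_coeff L k).1]

theorem L_C (L : A[X] →ₗ[A] A) (c : A) (p : A[X]) : L (C c * p) = c * L p := by
  rw [← smul_eq_C_mul, map_smul, smul_eq_mul]

theorem H_unit [Nontrivial A] {L : A[X] →ₗ[A] A} (hL : ∀ p : A[X], p.Monic → IsUnit (L (p * p)))
    (k : ℕ) : IsUnit (H L k) := hL _ (Q_monic L k)

theorem LX [Nontrivial A] {L : A[X] →ₗ[A] A} (hL : ∀ p : A[X], p.Monic → IsUnit (L (p * p)))
    (k : ℕ) : L (X * (Q L (k+1) * Q L (k+1))) = al L k * H L k := by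
  rw [al, mul_right_comm, Ring.inverse_mul_cancel _ (H_unit hL k), one_mul]

theorem be_H [Nontrivial A] {L : A[X] →ₗ[A] A} (hL : ∀ p : A[X], p.Monic → IsUnit (L (p * p)))
    (k : ℕ) : be L (k+1) * H L k = H L (k+1) := by
  have : L (Q L (k+1) * Q L (k+1)) = H L k := rfl
  rw [be, this, mul_right_comm, Ring.inverse_mul_cancel _ (H_unit hL k), one_mul]

theorem main1 [Nontrivial A] {L : A[X] →ₗ[A] A} (hL : ∀ p : A[X], p.Monic → IsUnit (L (p * p)))
    (k : ℕ) (h1 : ∀ q : A[X], (∀ j, k ≤ j → q.coeff j = 0) → L (Q L (k+1) * q) = 0) :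
    L (Q L (k+2) * Q L (k+1)) = 0 := by
  have hQQ : L (Q L (k+1) * Q L k) = 0 := h1 _ (Q_coeff' L k)
  have e : Q L (k+2) * Q L (k+1) = X * (Q L (k+1) * Q L (k+1)) - C (al L k) * (Q L (k+1) * Q L (k+1)) - C (be L k) * (Q L (k+1) * Q L k) := by
    linear_combination (-Q L (k+1)) * Q_rec L k
  rw [e, map_sub, map_sub, L_C, L_C, LX hL, hQQ, H]; ring

theorem main2 [Nontrivial A] {L : A[X] →ₗ[A] A} (hL : ∀ p : A[X], p.Monic → IsUnit (L (p * p)))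
    (k : ℕ) (h1 : ∀ q : A[X], (∀ j, k + 1 ≤ j → q.coeff j = 0) → L (Q L (k+2) * q) = 0) :
    L (Q L (k+3) * Q L (k+1)) = 0 := by
  have e : Q L (k+3) * Q L (k+1) = (Q L (k+2) * Q L (k+2)) + C (al L k) * (Q L (k+2) * Q L (k+1)) + C (be L k) * (Q L (k+2) * Q L k)
      - C (al L (k+1)) * (Q L (k+2) * Q L (k+1)) - C (be L (k+1)) * (Q L (k+1) * Q L (k+1)) := by
    linear_combination (-Q L (k+1)) * Q_rec L (k+1) + (Q L (k+2)) * Q_rec L k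
  have h0 : L (Q L (k+2) * Q L k) = 0 := h1 _ (fun j hj => Q_coeff' L k j (by omega))
  have hQQ : L (Q L (k+2) * Q L (k+1)) = 0 := h1 _ (Q_coeff' L (k+1))
  have hb := be_H hL k
  simp only [H] at hb
  rw [e]
  simp only [map_sub, map_add, L_C]
  rw [hQQ, h0, ← hb]; ring

theorem low {L : A[X] →ₗ[A] A}
    (k : ℕ) (h0 : ∀ q : A[X], (∀ j, k ≤ j + 1 → q.coeff j = 0) → L (Q L k * q) = 0)
    (h1 : ∀ q : A[X], (∀ j, k ≤ j → q.coeff j = 0) → L (Q L (k+1) * q) = 0)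
    (r : A[X]) (hr : ∀ j, k ≤ j + 1 → r.coeff j = 0) : L (Q L (k+2) * r) = 0 := by
  have e : Q L (k+2) * r = Q L (k+1) * (X * r) - C (al L k) * (Q L (k+1) * r) - C (be L k) * (Q L k * r) := by
    linear_combination (-r) * Q_rec L k
  have h1' : L (Q L (k+1) * (X * r)) = 0 := by
    apply h1; intro j hj
    cases j with
    | zero => simp
    | succ j => rw [coeff_X_mul]; exact hr j hj
  have h2 : L (Q L (k+1) * r) = 0 := h1 r (fun j hj => hr j (by omega))
  rw [e, map_sub, map_sub, L_C, L_C, h1', h2, h0 r hr]; ring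

theorem red {L : A[X] →ₗ[A] A} (k : ℕ) (p q : A[X]) (hp : L (p * Q L (k+1)) = 0)
    (hq : ∀ j, k < j → q.coeff j = 0) : ∃ r : A[X], (∀ j, k ≤ j → r.coeff j = 0) ∧
      L (p * q) = L (p * r) := by
  refine ⟨q - C (q.coeff k) * Q L (k+1), fun j hj => ?_, ?_⟩
  · rcases Nat.eq_or_lt_of_le hj with rfl | hj
    · simp [(Q_coeff L _).1]
    · simp [(Q_coeff L _).2 j hj, hq j hj]
  · have : p * (q - C (q.coeff k) * Q L (k+1)) = p * q - C (q.coeff k) * (p * Q L (k+1)) := by ring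
    rw [this, map_sub, L_C, hp]; ring

theorem orth [Nontrivial A] {L : A[X] →ₗ[A] A} (hL : ∀ p : A[X], p.Monic → IsUnit (L (p * p)))
    (k : ℕ) : (∀ q : A[X], (∀ j, k ≤ j + 1 → q.coeff j = 0) → L (Q L k * q) = 0) ∧
     ∀ q : A[X], (∀ j, k ≤ j → q.coeff j = 0) → L (Q L (k+1) * q) = 0 := by
  induction k with
  | zero =>
    refine ⟨fun q _ => by simp [Q_zero], fun q hq => ?_⟩
    have : q = 0 := by ext j; simpa using hq j (Nat.zero_le _)
    simp [this]
  | succ k ih =>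
    obtain ⟨h0, h1⟩ := ih
    refine ⟨fun q hq => h1 q (fun j hj => hq j (by omega)), fun q hq => ?_⟩
    obtain ⟨r, hr, e⟩ := red k (Q L (k+2)) q (main1 hL k h1) (fun j hj => hq j hj)
    rw [e]
    cases k with
    | zero => exact low 0 h0 h1 r (fun j _ => hr j (Nat.zero_le _))
    | succ k =>
      obtain ⟨r', hr', e'⟩ := red k (Q L (k+3)) r (main2 hL k h1) (fun j hj => hr j hj)
      rw [e']
      exact low (k+1) h0 h1 r' (fun j hj => hr' j (by omega))


theorem oo1 [Nontrivial A] {L : A[X] →ₗ[A] A} (hL : ∀ p : A[X], p.Monic → IsUnit (L (p * p)))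
    (k : ℕ) : L (Q L (k+1) * Q L k) = 0 := (orth hL k).2 _ (Q_coeff' L k)

theorem oo2 [Nontrivial A] {L : A[X] →ₗ[A] A} (hL : ∀ p : A[X], p.Monic → IsUnit (L (p * p)))
    (k : ℕ) : L (Q L (k+2) * Q L k) = 0 :=
  (orth hL (k+1)).2 _ (fun j hj => Q_coeff' L k j (by omega))

theorem oo3 [Nontrivial A] {L : A[X] →ₗ[A] A} (hL : ∀ p : A[X], p.Monic → IsUnit (L (p * p)))
    (k : ℕ) : L (Q L (k+3) * Q L k) = 0 :=
  (orth hL (k+2)).2 _ (fun j hj => Q_coeff' L k j (by omega))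

theorem beQ [Nontrivial A] {L : A[X] →ₗ[A] A} (hL : ∀ p : A[X], p.Monic → IsUnit (L (p * p)))
    (k : ℕ) : be L k * (be L k * L (Q L k * Q L k)) = be L k * H L k := by
  cases k with
  | zero => simp [be_zero]
  | succ k => rw [← be_H hL k]; rfl

theorem LXoff [Nontrivial A] {L : A[X] →ₗ[A] A} (hL : ∀ p : A[X], p.Monic → IsUnit (L (p * p)))
    (k : ℕ) : L (X * (Q L (k+2) * Q L (k+1))) = H L (k+1) := by
  have e : X * (Q L (k+2) * Q L (k+1)) = Q L (k+2) * Q L (k+2) + C (al L k) * (Q L (k+2) * Q L (k+1))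
      + C (be L k) * (Q L (k+2) * Q L k) := by
    linear_combination (Q L (k+2)) * Q_rec L k
  rw [e, map_add, map_add, L_C, L_C, oo1 hL, oo2 hL, H]; ring

theorem LXX [Nontrivial A] {L : A[X] →ₗ[A] A} (hL : ∀ p : A[X], p.Monic → IsUnit (L (p * p)))
    (k : ℕ) : L (X * (X * (Q L (k+1) * Q L (k+1)))) =
      H L k * (be L (k+1) + be L k + al L k ^ 2) := by
  have e : X * (X * (Q L (k+1) * Q L (k+1))) =
      Q L (k+2) * Q L (k+2) + C (al L k) * (C (al L k) * (Q L (k+1) * Q L (k+1)))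
      + C (be L k) * (C (be L k) * (Q L k * Q L k))
      + 2 • (C (al L k) * (Q L (k+2) * Q L (k+1)))
      + 2 • (C (be L k) * (Q L (k+2) * Q L k))
      + 2 • (C (al L k) * (C (be L k) * (Q L (k+1) * Q L k))) := by
    rw [show X * (X * (Q L (k+1) * Q L (k+1))) = (X * Q L (k+1)) * (X * Q L (k+1)) by ring, Q_rec]
    simp only [nsmul_eq_mul]; push_cast; ring
  rw [e]
  simp only [map_add, map_nsmul, L_C, oo1 hL, oo2 hL, beQ hL]
  have h1 : L (Q L (k+2) * Q L (k+2)) = be L (k+1) * H L k := (be_H hL k).symm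
  have h2 : L (Q L (k+1) * Q L (k+1)) = H L k := rfl
  rw [h1, h2]; simp; ring

theorem LXXoff [Nontrivial A] {L : A[X] →ₗ[A] A} (hL : ∀ p : A[X], p.Monic → IsUnit (L (p * p)))
    (k : ℕ) : L (X * (X * (Q L (k+2) * Q L (k+1)))) =
      H L (k+1) * (al L (k+1) + al L k) := by
  have e : X * (X * (Q L (k+2) * Q L (k+1))) =
      X * (Q L (k+2) * Q L (k+2)) + C (al L k) * (X * (Q L (k+2) * Q L (k+1)))
      + C (be L k) * (Q L (k+3) * Q L k + C (al L (k+1)) * (Q L (k+2) * Q L k)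
        + C (be L (k+1)) * (Q L (k+1) * Q L k)) := by
    linear_combination (X * Q L (k+2)) * Q_rec L k + (C (be L k) * Q L k) * Q_rec L (k+1)
  rw [e]
  simp only [map_add, L_C, oo1 hL, oo2 hL, oo3 hL, LXoff hL]
  rw [LX hL]; ring

def S (L : A[X] →ₗ[A] A) (k : ℕ) : A := ∑ j ∈ Finset.range k, al L j

theorem S_coeff (L : A[X] →ₗ[A] A) (k : ℕ) : (Q L (k+2)).coeff k = - S L (k+1) := by
  have e : ∀ k, Q L (k+2) = X * Q L (k+1) - C (al L k) * Q L (k+1) - C (be L k) * Q L k := by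
    intro k; rw [Q_rec]; ring
  induction k with
  | zero => simp [e 0, Q_zero, Q_one, S]
  | succ k ih =>
    rw [e (k+1), S, Finset.sum_range_succ]
    have h1 := (Q_coeff L (k+1)).1
    have h2 := Q_coeff' L (k+1) (k+1) le_rfl
    simp only [coeff_sub, coeff_X_mul, coeff_C_mul, ih, h1, h2, S]; ring

theorem coeff_X_deriv (p : A[X]) (j : ℕ) : (X * derivative p).coeff j = j * p.coeff j := by
  cases j with
  | zero => simp
  | succ j => rw [coeff_X_mul, coeff_derivative]; push_cast; ring

theorem deg1 [Nontrivial A] {L : A[X] →ₗ[A] A} (hL : ∀ p : A[X], p.Monic → IsUnit (L (p * p)))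
    (k : ℕ) : L (Q L (k+1) * (X * derivative (Q L (k+1)))) = k * H L k := by
  have h := (orth hL k).2 (X * derivative (Q L (k+1)) - C (k : A) * Q L (k+1)) (fun j hj => by
    rw [coeff_sub, coeff_X_deriv, coeff_C_mul]
    rcases Nat.eq_or_lt_of_le hj with rfl | hj
    · simp
    · simp [(Q_coeff L k).2 j hj])
  rw [mul_sub, mul_left_comm _ (C _), map_sub, L_C] at h
  rw [H]; linear_combination h

theorem deg2 [Nontrivial A] {L : A[X] →ₗ[A] A} (hL : ∀ p : A[X], p.Monic → IsUnit (L (p * p)))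
    (k : ℕ) : L (Q L (k+1) * (X * derivative (Q L (k+2)))) = S L (k+1) * H L k := by
  have h := (orth hL k).2 (X * derivative (Q L (k+2)) - C ((k+1 : ℕ) : A) * Q L (k+2)
      - C (S L (k+1)) * Q L (k+1)) (fun j hj => by
    rw [coeff_sub, coeff_sub, coeff_X_deriv, coeff_C_mul, coeff_C_mul]
    rcases Nat.eq_or_lt_of_le hj with rfl | hj
    · rw [S_coeff, (Q_coeff L k).1]; push_cast; ring
    · rw [(Q_coeff L k).2 j hj]
      rcases Nat.eq_or_lt_of_le (Nat.succ_le_of_lt hj) with rfl | hj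
      · simp
      · rw [(Q_coeff L (k+1)).2 j hj]; ring)
  have e : Q L (k+1) * (X * derivative (Q L (k+2)) - C ((k+1 : ℕ) : A) * Q L (k+2)
      - C (S L (k+1)) * Q L (k+1)) = Q L (k+1) * (X * derivative (Q L (k+2)))
      - C ((k+1 : ℕ) : A) * (Q L (k+2) * Q L (k+1)) - C (S L (k+1)) * (Q L (k+1) * Q L (k+1)) := by ring
  rw [e, map_sub, map_sub, L_C, L_C, oo1 hL] at h
  rw [H]; linear_combination h

theorem deg3 [Nontrivial A] {L : A[X] →ₗ[A] A} (hL : ∀ p : A[X], p.Monic → IsUnit (L (p * p)))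
    (k : ℕ) : L (Q L (k+2) * (X * derivative (Q L (k+1)))) = 0 :=
  (orth hL (k+1)).2 _ (fun j hj => by
    rw [coeff_X_deriv, (Q_coeff L k).2 j hj, mul_zero])

/-- second string equation -/
theorem string2 [Nontrivial A] {L : A[X] →ₗ[A] A} (hL : ∀ p : A[X], p.Monic → IsUnit (L (p * p)))
    (a s : A) (hs : ∀ p : A[X], L (X * derivative p) + (a + 1) * L p - 2 * L (X * (X * p))
      - 2 * s * L (X * p) = 0) (k : ℕ) :
    2 * (be L (k+1) + be L k) + 2 * al L k * (al L k + s) = 2 * k + 1 + a := by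
  have h := hs (Q L (k+1) * Q L (k+1))
  have e : X * derivative (Q L (k+1) * Q L (k+1)) = Q L (k+1) * (X * derivative (Q L (k+1)))
      + Q L (k+1) * (X * derivative (Q L (k+1))) := by
    rw [derivative_mul]; ring
  have h2 : L (Q L (k+1) * Q L (k+1)) = H L k := rfl
  rw [e, map_add, deg1 hL, h2, LXX hL, LX hL] at h
  apply (H_unit hL k).mul_left_cancel
  linear_combination -h

/-- relation for the subleading coefficient -/
theorem string1 [Nontrivial A] {L : A[X] →ₗ[A] A} (hL : ∀ p : A[X], p.Monic → IsUnit (L (p * p)))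
    (a s : A) (hs : ∀ p : A[X], L (X * derivative p) + (a + 1) * L p - 2 * L (X * (X * p))
      - 2 * s * L (X * p) = 0) (k : ℕ) :
    S L k = 2 * be L k * (al L k + al L (k-1) + s) := by
  cases k with
  | zero => simp [S, be_zero]
  | succ k =>
    have h := hs (Q L (k+2) * Q L (k+1))
    have e : X * derivative (Q L (k+2) * Q L (k+1)) = Q L (k+1) * (X * derivative (Q L (k+2)))
        + Q L (k+2) * (X * derivative (Q L (k+1))) := by
      rw [derivative_mul]; ring
    rw [e, map_add, deg2 hL, deg3 hL, oo1 hL, LXXoff hL, LXoff hL, ← be_H hL] at h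
    apply (H_unit hL k).mul_left_cancel
    simp only [Nat.add_sub_cancel]
    linear_combination h

theorem string3 [Nontrivial A] {L : A[X] →ₗ[A] A} (hL : ∀ p : A[X], p.Monic → IsUnit (L (p * p)))
    (a s : A) (hs : ∀ p : A[X], L (X * derivative p) + (a + 1) * L p - 2 * L (X * (X * p))
      - 2 * s * L (X * p) = 0) (k : ℕ) :
    4 * (al L k + s) * (al L (k-1) + s) * be L k = (2 * be L k - k) * (2 * be L k - k - a) := by
  induction k with
  | zero => simp [be_zero]
  | succ k ih =>
    have h1 := string1 hL a s hs k
    have h1' := string1 hL a s hs (k+1)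
    have h2 := string2 hL a s hs k
    have h3 : S L (k+1) = S L k + al L k := by rw [S, Finset.sum_range_succ]; rfl
    simp only [Nat.add_sub_cancel] at h1' ⊢
    push_cast
    linear_combination ih + 2 * (al L k + s) * (h1 - h1' + h3) + (1 - 2 * (be L (k+1) - be L k)) * h2

/-! derivations -/
section der
variable [Nontrivial A] {L : A[X] →ₗ[A] A} (δ : Derivation ℤ A A) (D : Derivation ℤ A[X] A[X])

theorem dd0 (hL : ∀ p : A[X], p.Monic → IsUnit (L (p * p)))
    (hc : ∀ p i, (D p).coeff i = δ (p.coeff i)) (k : ℕ) :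
    L (Q L (k+1) * D (Q L (k+1))) = 0 := (orth hL k).2 _ (fun j hj => by
  rw [hc]
  rcases Nat.eq_or_lt_of_le hj with rfl | hj
  · rw [(Q_coeff L k).1, Derivation.map_one_eq_zero]
  · rw [(Q_coeff L k).2 j hj, map_zero])

theorem dd1 (hL : ∀ p : A[X], p.Monic → IsUnit (L (p * p)))
    (hc : ∀ p i, (D p).coeff i = δ (p.coeff i)) (k : ℕ) :
    L (Q L (k+2) * D (Q L (k+1))) = 0 := (orth hL (k+1)).2 _ (fun j hj => by
  rw [hc, (Q_coeff L k).2 j hj, map_zero])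

theorem dd2 (hL : ∀ p : A[X], p.Monic → IsUnit (L (p * p)))
    (hc : ∀ p i, (D p).coeff i = δ (p.coeff i))
    (hδ : ∀ p, δ (L p) = L (D p) - 2 * L (X * p)) (k : ℕ) :
    be L k * L (Q L k * D (Q L (k+1))) = 2 * be L k * H L k := by
  cases k with
  | zero => simp [be_zero]
  | succ k =>
    have h := hδ (Q L (k+2) * Q L (k+1))
    rw [oo1 hL, map_zero, Derivation.leibniz, smul_eq_mul, smul_eq_mul, map_add, dd1 δ D hL hc, LXoff hL] at h
    linear_combination - be L (k+1) * h

theorem dH (hL : ∀ p : A[X], p.Monic → IsUnit (L (p * p)))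
    (hc : ∀ p i, (D p).coeff i = δ (p.coeff i))
    (hδ : ∀ p, δ (L p) = L (D p) - 2 * L (X * p)) (k : ℕ) :
    δ (H L k) = - 2 * al L k * H L k := by
  rw [H, hδ, Derivation.leibniz, smul_eq_mul, map_add, dd0 δ D hL hc, LX hL, H]; ring

theorem dbe (hL : ∀ p : A[X], p.Monic → IsUnit (L (p * p)))
    (hc : ∀ p i, (D p).coeff i = δ (p.coeff i))
    (hδ : ∀ p, δ (L p) = L (D p) - 2 * L (X * p)) (k : ℕ) :
    δ (be L (k+1)) = - 2 * be L (k+1) * (al L (k+1) - al L k) := by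
  have h := congrArg δ (be_H hL k)
  rw [Derivation.leibniz, smul_eq_mul, smul_eq_mul, dH δ D hL hc hδ, dH δ D hL hc hδ, ← be_H hL] at h
  apply (H_unit hL k).mul_left_cancel
  linear_combination h

theorem dal (hL : ∀ p : A[X], p.Monic → IsUnit (L (p * p)))
    (hc : ∀ p i, (D p).coeff i = δ (p.coeff i)) (hX : D X = 0)
    (hδ : ∀ p, δ (L p) = L (D p) - 2 * L (X * p)) (k : ℕ) :
    δ (al L k) = - 2 * (be L (k+1) - be L k) := by
  have h := congrArg δ (LX hL k)
  have e : D (X * (Q L (k+1) * Q L (k+1))) = 2 • (Q L (k+2) * D (Q L (k+1))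
      + C (al L k) * (Q L (k+1) * D (Q L (k+1))) + C (be L k) * (Q L k * D (Q L (k+1)))) := by
    rw [Derivation.leibniz, Derivation.leibniz, hX]
    simp only [smul_eq_mul, nsmul_eq_mul]
    push_cast
    linear_combination 2 * D (Q L (k+1)) * Q_rec L k
  rw [hδ, e, map_nsmul] at h
  simp only [map_add, L_C, dd0 δ D hL hc, dd1 δ D hL hc, dd2 δ D hL hc hδ, LXX hL,
    Derivation.leibniz, smul_eq_mul, dH δ D hL hc hδ, nsmul_eq_mul] at h
  push_cast at h
  apply (H_unit hL k).mul_left_cancel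
  linear_combination -h

theorem dS (hL : ∀ p : A[X], p.Monic → IsUnit (L (p * p)))
    (hc : ∀ p i, (D p).coeff i = δ (p.coeff i)) (hX : D X = 0)
    (hδ : ∀ p, δ (L p) = L (D p) - 2 * L (X * p)) (k : ℕ) :
    δ (S L k) = - 2 * be L k := by
  induction k with
  | zero => simp [S, be_zero]
  | succ k ih =>
    have h3 : S L (k+1) = S L k + al L k := by rw [S, Finset.sum_range_succ]; rfl
    rw [h3, map_add, ih, dal δ D hL hc hX hδ]; ring

theorem painleve (hL : ∀ p : A[X], p.Monic → IsUnit (L (p * p)))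
    (hc : ∀ p i, (D p).coeff i = δ (p.coeff i)) (hX : D X = 0)
    (hδ : ∀ p, δ (L p) = L (D p) - 2 * L (X * p))
    (a s : A) (hs : ∀ p : A[X], L (X * derivative p) + (a + 1) * L p - 2 * L (X * (X * p))
      - 2 * s * L (X * p) = 0) (hds : δ s = 1) (k : ℕ) (h : A)
    (hh : h = - 2 * ((k+1 : ℕ) : A) * s - 2 * S L (k+1)) :
    δ (δ (δ h)) + 6 * (δ h)^2 - 4 * (s^2 + 2 * (a - ((k+1 : ℕ) : A))) * δ h + 4 * s * h
      - 8 * a * ((k+1 : ℕ) : A) = 0 := by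
  have d2 : δ (2 : A) = 0 := by simpa using δ.map_natCast 2
  have d4 : δ (4 : A) = 0 := by simpa using δ.map_natCast 4
  have d8 : δ (8 : A) = 0 := by simpa using δ.map_natCast 8
  have dk : δ ((k+1 : ℕ) : A) = 0 := δ.map_natCast (k+1)
  have e1 : δ h = 4 * be L (k+1) - 2 * ((k+1 : ℕ) : A) := by
    rw [hh]
    simp only [map_sub, Derivation.leibniz, smul_eq_mul, map_neg, d2, dk, hds, dS δ D hL hc hX hδ]
    ring
  have e2 : δ (δ h) = - 8 * (be L (k+1) * (al L (k+1) - al L k)) := by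
    rw [e1]
    simp only [map_sub, Derivation.leibniz, smul_eq_mul, d2, d4, dk, dbe δ D hL hc hδ]
    ring
  have e3 : δ (δ (δ h)) = - 8 * (be L (k+1) * (- 2 * (be L (k+2) - be L (k+1)) + 2 * (be L (k+1) - be L k)) + (al L (k+1) - al L k) * (- 2 * be L (k+1) * (al L (k+1) - al L k))) := by
    rw [e2]
    simp only [map_sub, Derivation.leibniz, smul_eq_mul, map_neg, d8, dal δ D hL hc hX hδ, dbe δ D hL hc hδ]
    ring
  have s1 := string1 hL a s hs (k+1)
  have s2 := string2 hL a s hs (k+1)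
  have s2' := string2 hL a s hs k
  have s3 := string3 hL a s hs (k+1)
  simp only [Nat.add_sub_cancel] at s1 s3
  rw [e3, e1, hh, s1]
  push_cast at *
  linear_combination (-8) * s3 + 8 * be L (k+1) * (s2 + s2')
end der

end OP
namespace AN
open Polynomial Set

def w (a s x : ℝ) : ℝ := x ^ a * Real.exp (-x^2 - 2 * s * x)

theorem w_meas (a s : ℝ) : Measurable (w a s) := by
  unfold w; fun_prop

theorem w_int {a : ℝ} (ha : -1 < a) (k : ℕ) (s : ℝ) :
    IntegrableOn (fun x => x ^ k * w a s x) (Ioi 0) := by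
  have h := (integrableOn_rpow_mul_exp_neg_mul_sq (b := 1/2) (by norm_num) (s := a + k)
    (by have : (0:ℝ) ≤ k := Nat.cast_nonneg k
        linarith)).const_mul (Real.exp (2 * s^2))
  refine Integrable.mono' h ?_ ?_
  · exact ((measurable_id.pow_const k).mul (w_meas a s)).aestronglyMeasurable
  · filter_upwards [ae_restrict_mem measurableSet_Ioi] with x hx
    have hx : 0 < x := hx
    unfold w
    rw [Real.norm_of_nonneg (by positivity), Real.rpow_add hx, Real.rpow_natCast]
    have : Real.exp (-x^2 - 2*s*x) ≤ Real.exp (2 * s^2) * Real.exp (-(1/2) * x^2) := by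
      rw [← Real.exp_add]
      apply Real.exp_le_exp.2
      nlinarith [sq_nonneg (x + 2 * s)]
    calc x ^ k * (x ^ a * Real.exp (-x^2 - 2*s*x))
        ≤ x ^ k * (x ^ a * (Real.exp (2 * s^2) * Real.exp (-(1/2) * x^2))) := by gcongr
      _ = _ := by ring

def mom (a : ℝ) (k : ℕ) (s : ℝ) : ℝ := ∫ x in Ioi (0:ℝ), x ^ k * w a s x

theorem mom_deriv {a : ℝ} (ha : -1 < a) (k : ℕ) (s : ℝ) :
    HasDerivAt (mom a k) (-2 * mom a (k+1) s) s := by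
  have key := hasDerivAt_integral_of_dominated_loc_of_deriv_le (μ := volume.restrict (Ioi (0:ℝ)))
    (F := fun s x => x ^ k * w a s x) (F' := fun s x => -2 * (x ^ (k+1) * w a s x))
    (x₀ := s) (s := Metric.ball s 1) (bound := fun x => 2 * (x ^ (k+1) * w a (-(|s|+1)) x))
    (Metric.ball_mem_nhds s one_pos)
    (Eventually.of_forall fun s => ((measurable_id.pow_const k).mul (w_meas a s)).aestronglyMeasurable)
    (w_int ha k s)
    ((((measurable_id.pow_const (k+1)).mul (w_meas a s)).const_mul (-2)).aestronglyMeasurable)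
    ?_ ((w_int ha (k+1) _).const_mul 2) ?_
  · have := key.2
    rw [integral_const_mul] at this
    exact this
  · filter_upwards [ae_restrict_mem measurableSet_Ioi] with x hx t ht
    have hx : 0 < x := hx
    unfold w
    rw [norm_mul, Real.norm_of_nonneg (r := x ^ (k+1) * (x ^ a * Real.exp (-x^2 - 2 * t * x))) (by positivity)]
    have h2 : ‖(-2:ℝ)‖ = 2 := by norm_num
    rw [h2]
    have : -t ≤ |s| + 1 := by
      rw [Metric.mem_ball, Real.dist_eq] at ht
      have := abs_lt.1 ht
      have := neg_abs_le s
      linarith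
    gcongr 2 * (x ^ (k+1) * (x ^ a * Real.exp ?_))
    nlinarith
  · refine Eventually.of_forall fun x t _ => ?_
    unfold w
    have h : HasDerivAt (fun t : ℝ => -x^2 - 2 * t * x) (-2 * x) t := by
      have := (((hasDerivAt_id t).const_mul 2).mul_const x).const_sub (-x^2)
      exact this.congr_deriv (by ring)
    have := (h.exp.const_mul (x^a)).const_mul (x^k)
    exact this.congr_deriv (by ring)

theorem mom_smooth {a : ℝ} (ha : -1 < a) (k : ℕ) : ContDiff ℝ (⊤ : ℕ∞) (mom a k) := by
  rw [contDiff_infty]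
  intro n
  induction n generalizing k with
  | zero => 
    exact contDiff_zero.2 (continuous_iff_continuousAt.2 fun s => (mom_deriv ha k s).continuousAt)
  | succ n ih =>
    have : ((n+1 : ℕ) : WithTop ℕ∞) = (n : WithTop ℕ∞) + 1 := by push_cast; rfl
    rw [this, contDiff_succ_iff_deriv]
    refine ⟨fun s => (mom_deriv ha k s).differentiableAt, by simp, ?_⟩
    have e : deriv (mom a k) = fun s => -2 * mom a (k+1) s := by
      ext s; exact (mom_deriv ha k s).deriv
    rw [e]
    exact contDiff_const.mul (ih (k+1))

theorem mom_string {a : ℝ} (ha : -1 < a) (k : ℕ) (s : ℝ) :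
    (k + a + 1) * mom a k s - 2 * mom a (k+2) s - 2 * s * mom a (k+1) s = 0 := by
  have hb : 0 < a + k + 1 := by
    have : (0:ℝ) ≤ k := Nat.cast_nonneg k
    linarith
  have i0 := (w_int ha k s).const_mul (k + a + 1)
  have i1 := (w_int ha (k+1) s).const_mul (2 * s)
  have i2 := (w_int ha (k+2) s).const_mul 2
  have hi := (i0.sub i2).sub i1
  have key := integral_Ioi_of_hasDerivAt_of_tendsto (a := 0) (m := 0)
    (f := fun x : ℝ => x ^ (a + k + 1) * Real.exp (-x^2 - 2 * s * x))
    (f' := fun x => (k + a + 1) * (x ^ k * w a s x) - 2 * (x ^ (k+2) * w a s x)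
      - 2 * s * (x ^ (k+1) * w a s x)) ?_ ?_ hi ?_
  · rw [integral_sub, integral_sub, integral_const_mul, integral_const_mul, integral_const_mul] at key
    · simp only [mom]
      rw [key]; simp [Real.zero_rpow hb.ne']
    · exact i0
    · exact i2
    · exact i0.sub i2
    · exact i1
  · apply Continuous.continuousWithinAt
    exact (Real.continuous_rpow_const hb.le).mul (by fun_prop)
  · intro x hx
    have hx : 0 < x := hx
    have h : HasDerivAt (fun x : ℝ => -x^2 - 2 * s * x) (-2 * x - 2 * s) x := by
      have := ((hasDerivAt_pow 2 x).neg).sub ((hasDerivAt_id x).const_mul (2 * s))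
      exact this.congr_deriv (by simp)
    have := (Real.hasDerivAt_rpow_const (p := a + k + 1) (Or.inl hx.ne')).mul h.exp
    refine this.congr_deriv ?_
    unfold w
    have e1 : x ^ (a + k + 1) = x ^ k * x ^ a * x := by
      rw [Real.rpow_add hx, Real.rpow_add hx, Real.rpow_natCast, Real.rpow_one]; ring
    have e2 : x ^ (a + k + 1 - 1) = x ^ k * x ^ a := by
      rw [add_sub_cancel_right, Real.rpow_add hx, Real.rpow_natCast]; ring
    rw [e1, e2]; ring
  · have h1 := rpow_mul_exp_neg_mul_sq_isLittleO_exp_neg (b := 1/2) (by norm_num) (a + k + 1)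
    have h2 : Tendsto (fun x : ℝ => x ^ (a+k+1) * Real.exp (-(1/2) * x^2)) atTop (𝓝 0) := by
      apply h1.trans_tendsto
      have : Tendsto (fun x : ℝ => (1/2) * x) atTop atTop := tendsto_id.const_mul_atTop (by norm_num)
      have := Real.tendsto_exp_neg_atTop_nhds_zero.comp this
      refine this.congr fun x => ?_
      simp [Function.comp]
    have h3 := h2.const_mul (Real.exp (2 * s^2))
    rw [mul_zero] at h3
    refine squeeze_zero' ?_ ?_ h3
    · filter_upwards [eventually_gt_atTop 0] with x hx
      positivity
    · filter_upwards [eventually_gt_atTop 0] with x hx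
      have : Real.exp (-x^2 - 2*s*x) ≤ Real.exp (2 * s^2) * Real.exp (-(1/2) * x^2) := by
        rw [← Real.exp_add]
        apply Real.exp_le_exp.2
        nlinarith [sq_nonneg (x + 2 * s)]
      calc x ^ (a+k+1) * Real.exp (-x^2 - 2*s*x)
        ≤ x ^ (a+k+1) * (Real.exp (2 * s^2) * Real.exp (-(1/2) * x^2)) := by gcongr
      _ = _ := by ring

theorem poly_int {a : ℝ} (ha : -1 < a) (s : ℝ) (p : ℝ[X]) :
    IntegrableOn (fun x => p.eval x * w a s x) (Ioi 0) := by
  induction p using Polynomial.induction_on' with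
  | add p q hp hq =>
    simp only [eval_add, add_mul]; exact hp.add hq
  | monomial k c =>
    simp only [eval_monomial, mul_assoc]; exact (w_int ha k s).const_mul c

theorem poly_pos {a : ℝ} (ha : -1 < a) (s : ℝ) (p : ℝ[X]) (hp : p ≠ 0) :
    0 < ∫ x in Ioi (0:ℝ), (p * p).eval x * w a s x := by
  have hnn : 0 ≤ᵐ[volume.restrict (Ioi (0:ℝ))] fun x => (p * p).eval x * w a s x := by
    filter_upwards [ae_restrict_mem measurableSet_Ioi] with x hx
    have hx : 0 < x := hx
    unfold w
    rw [eval_mul]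
    have := mul_self_nonneg (p.eval x)
    positivity
  rw [setIntegral_pos_iff_support_of_nonneg_ae hnn (poly_int ha s _)]
  have hsub : Ioi (0:ℝ) \ (p.roots.toFinset : Set ℝ) ⊆
      Function.support (fun x => (p * p).eval x * w a s x) ∩ Ioi 0 := by
    rintro x ⟨hx, hr⟩
    refine ⟨?_, hx⟩
    have hx' : 0 < x := hx
    have : p.eval x ≠ 0 := by
      intro h; apply hr
      simp [hp, h]
    rw [Function.mem_support, eval_mul]
    unfold w
    positivity
  refine lt_of_lt_of_le ?_ (measure_mono hsub)
  rw [measure_sdiff_null ((Finset.finite_toSet _).measure_zero _)]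
  simp

theorem andreief {n : ℕ} (ν : Measure ℝ) [SigmaFinite ν] (W : ℝ → ℝ) (p : Fin n → ℝ[X])
    (hd : ∀ i, (p i).natDegree = i) (hm : ∀ i, (p i).Monic)
    (hi : ∀ i j, Integrable (fun x => (p i).eval x * (p j).eval x * W x) ν)
    (ho : ∀ i j, i ≠ j → ∫ x, (p i).eval x * (p j).eval x * W x ∂ν = 0) :
    Integrable (fun z : Fin n → ℝ => vdm z ^ 2 * ∏ i, W (z i)) (Measure.pi fun _ => ν) ∧
    ∫ z, vdm z ^ 2 * ∏ i, W (z i) ∂(Measure.pi fun _ : Fin n => ν) =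
      n.factorial * ∏ i, ∫ x, (p i).eval x * (p i).eval x * W x ∂ν := by
  have hv : ∀ z : Fin n → ℝ, vdm z ^ 2 * ∏ i, W (z i) =
      ∑ σ : Equiv.Perm (Fin n), ∑ τ : Equiv.Perm (Fin n),
        (((Equiv.Perm.sign σ : ℤ) : ℝ) * ((Equiv.Perm.sign τ : ℤ) : ℝ)) *
          ∏ i, ((p (σ i)).eval (z i) * (p (τ i)).eval (z i) * W (z i)) := by
    intro z
    have h1 : vdm z ^ 2 = (Matrix.vandermonde z).det ^ 2 := by
      rw [Matrix.det_vandermonde, vdm, ← Finset.prod_pow, ← Finset.prod_pow]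
      refine Finset.prod_congr rfl fun i _ => ?_
      rw [← Finset.prod_pow, ← Finset.prod_pow]
      exact Finset.prod_congr rfl fun j _ => by ring
    rw [h1, Matrix.det_eval_matrixOfPolynomials_eq_det_vandermonde z p hd hm, ← Matrix.det_transpose,
      Matrix.det_apply', sq, Finset.sum_mul_sum, Finset.sum_mul]
    refine Finset.sum_congr rfl fun σ _ => ?_
    rw [Finset.sum_mul]
    refine Finset.sum_congr rfl fun τ _ => ?_
    simp only [Finset.prod_mul_distrib, Matrix.transpose_apply, Matrix.of_apply]
    ring
  have hI : ∀ σ τ : Equiv.Perm (Fin n), Integrable (fun z : Fin n → ℝ =>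
      (((Equiv.Perm.sign σ : ℤ) : ℝ) * ((Equiv.Perm.sign τ : ℤ) : ℝ)) *
          ∏ i, ((p (σ i)).eval (z i) * (p (τ i)).eval (z i) * W (z i))) (Measure.pi fun _ => ν) := by
    intro σ τ
    apply Integrable.const_mul
    exact Integrable.fintype_prod (f := fun i x => (p (σ i)).eval x * (p (τ i)).eval x * W x)
      (fun i => hi (σ i) (τ i))
  simp only [hv]
  refine ⟨integrable_finsetSum _ fun σ _ => integrable_finsetSum _ fun τ _ => hI σ τ, ?_⟩
  rw [integral_finsetSum _ fun σ _ => integrable_finsetSum _ fun τ _ => hI σ τ]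
  have : ∀ σ : Equiv.Perm (Fin n), ∫ z : Fin n → ℝ, ∑ τ : Equiv.Perm (Fin n),
        (((Equiv.Perm.sign σ : ℤ) : ℝ) * ((Equiv.Perm.sign τ : ℤ) : ℝ)) *
          ∏ i, ((p (σ i)).eval (z i) * (p (τ i)).eval (z i) * W (z i)) ∂(Measure.pi fun _ => ν)
        = ∏ i, ∫ x, (p i).eval x * (p i).eval x * W x ∂ν := by
    intro σ
    rw [integral_finsetSum _ fun τ _ => hI σ τ, Finset.sum_eq_single σ]
    · rw [integral_const_mul, integral_fintype_prod_eq_prod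
        (f := fun i x => (p (σ i)).eval x * (p (σ i)).eval x * W x),
        Equiv.prod_comp σ (fun i => ∫ x, (p i).eval x * (p i).eval x * W x ∂ν)]
      have : ((Equiv.Perm.sign σ : ℤ) : ℝ) * ((Equiv.Perm.sign σ : ℤ) : ℝ) = 1 := by
        rcases Int.units_eq_one_or (Equiv.Perm.sign σ) with h | h <;> simp [h]
      rw [this, one_mul]
    · intro τ _ hne
      rw [integral_const_mul, integral_fintype_prod_eq_prod
        (f := fun i x => (p (σ i)).eval x * (p (τ i)).eval x * W x)]
      obtain ⟨i, hi⟩ : ∃ i, σ i ≠ τ i := by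
        by_contra! h
        exact hne (Equiv.ext fun i => (h i).symm)
      rw [Finset.prod_eq_zero (Finset.mem_univ i) (ho _ _ hi), mul_zero]
    · simp
  simp only [this]
  simp [Fintype.card_perm]

theorem shift_int (s a : ℝ) (g : ℝ → ℝ) (hg : IntegrableOn (fun x => g x * w a s x) (Ioi 0)) :
    IntegrableOn (fun z => g (z - s) * ((z - s) ^ a * Real.exp (-(z^2)))) (Ici s) ∧
    ∫ z in Ici s, g (z - s) * ((z - s) ^ a * Real.exp (-(z^2))) =
      Real.exp (-s^2) * ∫ x in Ioi (0:ℝ), g x * w a s x := by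
  have mp := measurePreserving_sub_right (volume : Measure ℝ) s
  have me : MeasurableEmbedding (fun z : ℝ => z - s) := (MeasurableEquiv.subRight s).measurableEmbedding
  have hpre : (fun z : ℝ => z - s) ⁻¹' (Ioi 0) = Ioi s := by ext; simp
  have e : (fun z => g (z - s) * ((z - s) ^ a * Real.exp (-(z^2)))) =
      (fun x => Real.exp (-s^2) * (g x * w a s x)) ∘ (fun z => z - s) := by
    ext z
    simp only [Function.comp, w]
    have : Real.exp (-(z^2)) = Real.exp (-s^2) * Real.exp (-(z-s)^2 - 2 * s * (z - s)) := by
      rw [← Real.exp_add]; congr 1; ring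
    rw [this]; ring
  constructor
  · rw [integrableOn_Ici_iff_integrableOn_Ioi, e, ← hpre, mp.integrableOn_comp_preimage me]
    exact hg.const_mul _
  · rw [integral_Ici_eq_integral_Ioi, e, ← hpre, ← integral_const_mul]
    exact mp.setIntegral_preimage_emb me (fun x => Real.exp (-s^2) * (g x * w a s x)) _

end AN

namespace FIN
open Polynomial Set AN

/-- smooth functions -/
def SM : Subring (ℝ → ℝ) where
  carrier := {f | ContDiff ℝ (⊤ : ℕ∞) f}
  mul_mem' := fun {f g} (hf : ContDiff ℝ _ f) (hg : ContDiff ℝ _ g) => show ContDiff ℝ (⊤ : ℕ∞) (fun x => f x * g x) from hf.mul hg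
  one_mem' := show ContDiff ℝ (⊤ : ℕ∞) (fun _ : ℝ => (1:ℝ)) from contDiff_const
  add_mem' := fun {f g} (hf : ContDiff ℝ _ f) (hg : ContDiff ℝ _ g) => show ContDiff ℝ (⊤ : ℕ∞) (fun x => f x + g x) from hf.add hg
  zero_mem' := show ContDiff ℝ (⊤ : ℕ∞) (fun _ : ℝ => (0:ℝ)) from contDiff_const
  neg_mem' := fun {f} (hf : ContDiff ℝ _ f) => show ContDiff ℝ (⊤ : ℕ∞) (fun x => - f x) from hf.neg

theorem SM_smooth (f : SM) : ContDiff ℝ (⊤ : ℕ∞) f.1 := f.2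

theorem SM_diff (f : SM) : Differentiable ℝ f.1 := (SM_smooth f).differentiable (by simp)

theorem SM_deriv_mem (f : SM) : deriv f.1 ∈ SM := by
  have h : ContDiff ℝ ((⊤ : ℕ∞) + 1) f.1 := by
    simpa using SM_smooth f
  exact (contDiff_succ_iff_deriv.1 h).2.2

def dlt : Derivation ℤ SM SM :=
  Derivation.mk' (AddMonoidHom.toIntLinearMap
    { toFun := fun f => ⟨deriv f.1, SM_deriv_mem f⟩
      map_zero' := by
        apply Subtype.ext; ext x
        exact deriv_const x (0:ℝ)
      map_add' := fun f g => by
        apply Subtype.ext; ext x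
        exact deriv_add (SM_diff f x) (SM_diff g x) }) (by
    intro f g
    apply Subtype.ext; ext x
    have := deriv_mul (SM_diff f x) (SM_diff g x)
    change deriv (f.1 * g.1) x = f.1 x * deriv g.1 x + g.1 x * deriv f.1 x
    rw [this]; ring)

theorem dlt_coe (f : SM) : (dlt f).1 = deriv f.1 := rfl

instance : Differential SM := ⟨dlt⟩

def ev (s : ℝ) : SM →+* ℝ := (Pi.evalRingHom (fun _ : ℝ => ℝ) s).comp SM.subtype

theorem ev_apply (s : ℝ) (f : SM) : ev s f = f.1 s := rfl

instance : Nontrivial SM := (ev 0).domain_nontrivial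

theorem SM_ext {f g : SM} (h : ∀ s, ev s f = ev s g) : f = g := by
  apply Subtype.ext; ext s; exact h s

theorem ev_dlt (s : ℝ) (f : SM) : ev s (dlt f) = deriv f.1 s := rfl

theorem SM_unit {f : SM} (h : ∀ s, ev s f ≠ 0) : IsUnit f := by
  refine IsUnit.of_mul_eq_one ⟨fun s => (f.1 s)⁻¹, (SM_smooth f).inv h⟩ ?_
  apply SM_ext; intro s
  rw [map_mul, map_one]
  exact mul_inv_cancel₀ (h s)

variable {a : ℝ} (ha : -1 < a)

def mS (ha : -1 < a) (k : ℕ) : SM := ⟨mom a k, mom_smooth ha k⟩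

def Lf (ha : -1 < a) : SM[X] →ₗ[SM] SM :=
  Polynomial.lsum fun k => LinearMap.toSpanSingleton SM SM (mS ha k)

theorem Lf_monomial (k : ℕ) (c : SM) : Lf ha (monomial k c) = c * mS ha k := by
  unfold Lf
  rw [Polynomial.lsum_apply, Polynomial.sum_monomial_index]
  · simp
  · simp

theorem Lf_ev (s : ℝ) (p : SM[X]) :
    ev s (Lf ha p) = ∫ x in Ioi (0:ℝ), (p.map (ev s)).eval x * w a s x := by
  induction p using Polynomial.induction_on' with
  | add p q hp hq =>
    rw [map_add, map_add, hp, hq, ← integral_add (poly_int ha s _) (poly_int ha s _)]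
    simp only [Polynomial.map_add, eval_add, add_mul]
  | monomial k c =>
    rw [Lf_monomial, map_mul]
    simp only [map_monomial, eval_monomial, mul_assoc]
    rw [integral_const_mul]; rfl

theorem Lf_unit (p : SM[X]) (hp : p.Monic) : IsUnit (Lf ha (p * p)) := by
  apply SM_unit
  intro s
  rw [Lf_ev, Polynomial.map_mul]
  exact (poly_pos ha s _ (hp.map (ev s)).ne_zero).ne'

theorem d_mS (k : ℕ) : dlt (mS ha k) = - 2 * mS ha (k+1) := by
  apply SM_ext; intro s
  rw [ev_dlt, map_mul, map_neg, map_ofNat]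
  exact (mom_deriv ha k s).deriv

theorem Lf_d (p : SM[X]) :
    dlt (Lf ha p) = Lf ha (Differential.mapCoeffs p) - 2 * Lf ha (X * p) := by
  induction p using Polynomial.induction_on' with
  | add p q hp hq =>
    rw [mul_add]; simp only [map_add, hp, hq]; ring
  | monomial k c =>
    rw [X_mul_monomial, Differential.mapCoeffs_monomial, Lf_monomial, Lf_monomial, Lf_monomial,
      Derivation.leibniz, d_mS, smul_eq_mul, smul_eq_mul]
    change _ = dlt c * _ - _
    ring

def cst (c : ℝ) : SM := ⟨fun _ => c, show ContDiff ℝ (⊤ : ℕ∞) (fun _ : ℝ => c) from contDiff_const⟩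
def idS : SM := ⟨fun s => s, show ContDiff ℝ (⊤ : ℕ∞) (fun s : ℝ => s) from contDiff_id⟩

theorem ev_cst (s c : ℝ) : ev s (cst c) = c := rfl
theorem ev_idS (s : ℝ) : ev s idS = s := rfl

theorem d_idS : dlt idS = 1 := by
  apply SM_ext; intro s
  rw [ev_dlt, map_one]
  exact deriv_id s

theorem mS_string (k : ℕ) : ((k : SM) + cst a + 1) * mS ha k - 2 * mS ha (k+2)
    - 2 * idS * mS ha (k+1) = 0 := by
  apply SM_ext; intro s
  simp only [map_sub, map_mul, map_add, map_one, map_zero, map_ofNat, map_natCast, ev_cst, ev_idS]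
  exact mom_string ha k s

theorem Lf_string (p : SM[X]) : Lf ha (X * derivative p) + (cst a + 1) * Lf ha p
    - 2 * Lf ha (X * (X * p)) - 2 * idS * Lf ha (X * p) = 0 := by
  induction p using Polynomial.induction_on' with
  | add p q hp hq =>
    simp only [mul_add, map_add]
    linear_combination hp + hq
  | monomial k c =>
    have e : X * derivative (monomial k c) = monomial k (c * (k : SM)) := by
      ext j : 1
      rw [OP.coeff_X_deriv, coeff_monomial, coeff_monomial]
      split_ifs with h
      · rw [h]; ring
      · ring
    rw [e, X_mul_monomial, X_mul_monomial, Lf_monomial, Lf_monomial, Lf_monomial, Lf_monomial]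
    linear_combination c * mS_string ha k

/-- the polynomials at a point -/
def qp (ha : -1 < a) (s : ℝ) (k : ℕ) : ℝ[X] := (OP.Q (Lf ha) (k+1)).map (ev s)

theorem qp_monic (s : ℝ) (k : ℕ) : (qp ha s k).Monic := (OP.Q_monic _ k).map _

theorem qp_deg (s : ℝ) (k : ℕ) : (qp ha s k).natDegree = k := by
  rw [qp, (OP.Q_monic (Lf ha) k).natDegree_map, OP.Q_natDegree]

theorem qp_H (s : ℝ) (k : ℕ) : ∫ x in Ioi (0:ℝ), (qp ha s k * qp ha s k).eval x * w a s x =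
    ev s (OP.H (Lf ha) k) := by
  rw [OP.H, Lf_ev, Polynomial.map_mul]; rfl

theorem H_pos (s : ℝ) (k : ℕ) : 0 < ev s (OP.H (Lf ha) k) := by
  rw [← qp_H]; exact poly_pos ha s _ (qp_monic ha s k).ne_zero

theorem qp_orth_lt (s : ℝ) (i j : ℕ) (h : i < j) :
    ∫ x in Ioi (0:ℝ), (qp ha s j * qp ha s i).eval x * w a s x = 0 := by
  have := (OP.orth (Lf_unit ha) j).2 (OP.Q (Lf ha) (i+1))
    (fun l hl => OP.Q_coeff' _ _ l (by omega))
  have h2 := congrArg (ev s) this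
  rw [Lf_ev, Polynomial.map_mul, map_zero] at h2
  exact h2

theorem qp_orth (s : ℝ) (i j : ℕ) (h : i ≠ j) :
    ∫ x in Ioi (0:ℝ), (qp ha s i * qp ha s j).eval x * w a s x = 0 := by
  rcases lt_or_gt_of_ne h with h | h
  · rw [mul_comm]; exact qp_orth_lt ha s i j h
  · exact qp_orth_lt ha s j i h

theorem matInt_formula (n : ℕ) (s : ℝ) :
    IntegrableOn
        (fun z : Fin n → ℝ => vdm z ^ 2 * ∏ i, ((z i - s) ^ a * Real.exp (-(z i ^ 2))))
        (Set.univ.pi fun _ : Fin n => Set.Ici s) ∧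
    matInt4 n a s = n.factorial * ∏ i : Fin n, (Real.exp (-s^2) * ev s (OP.H (Lf ha) i)) := by
  have hsh : ∀ i j : ℕ, IntegrableOn (fun x => ((qp ha s i).comp (X - C s)).eval x
      * ((qp ha s j).comp (X - C s)).eval x * ((x - s) ^ a * Real.exp (-(x^2)))) (Ici s) ∧
      ∫ x in Ici s, ((qp ha s i).comp (X - C s)).eval x
      * ((qp ha s j).comp (X - C s)).eval x * ((x - s) ^ a * Real.exp (-(x^2))) =
      Real.exp (-s^2) * ∫ x in Ioi (0:ℝ), (qp ha s i * qp ha s j).eval x * w a s x := by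
    intro i j
    have := shift_int s a (fun x => (qp ha s i * qp ha s j).eval x) (poly_int ha s _)
    simpa only [eval_comp, eval_sub, eval_X, eval_C, eval_mul] using this
  have key := andreief (n := n) (volume.restrict (Ici s))
    (fun x => (x - s) ^ a * Real.exp (-(x^2))) (fun i => (qp ha s i).comp (X - C s))
    (fun i => by rw [natDegree_comp, natDegree_X_sub_C, mul_one, qp_deg])
    (fun i => (qp_monic ha s i).comp (monic_X_sub_C s) (by rw [natDegree_X_sub_C]; exact one_ne_zero))
    (fun i j => (hsh i j).1)
    (fun i j hij => by
      rw [(hsh i j).2, qp_orth ha s i j (fun h => hij (Fin.ext h)), mul_zero])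
  have hr : (volume : Measure (Fin n → ℝ)).restrict (Set.univ.pi fun _ : Fin n => Set.Ici s) =
      Measure.pi fun _ => volume.restrict (Ici s) := by
    rw [volume_pi, Measure.restrict_pi_pi]
  refine ⟨?_, ?_⟩
  · rw [IntegrableOn, hr]; exact key.1
  · rw [matInt4, hr, key.2]
    congr 1
    refine Finset.prod_congr rfl fun i _ => ?_
    rw [(hsh i i).2, qp_H]

theorem log_formula (n : ℕ) (s : ℝ) :
    Real.log (matInt4 n a s) = Real.log n.factorial +
      ∑ i ∈ Finset.range n, (-s^2 + Real.log (ev s (OP.H (Lf ha) i))) := by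
  have hf : (n.factorial : ℝ) ≠ 0 := by exact_mod_cast n.factorial_ne_zero
  have hp : ∀ i : Fin n, Real.exp (-s^2) * ev s (OP.H (Lf ha) i) ≠ 0 := fun i =>
    (mul_pos (Real.exp_pos _) (H_pos ha s i)).ne'
  rw [(matInt_formula ha n s).2, Real.log_mul hf (Finset.prod_ne_zero_iff.2 fun i _ => hp i),
    Real.log_prod (fun i _ => hp i), Finset.sum_range]
  congr 1
  refine Finset.sum_congr rfl fun i _ => ?_
  rw [Real.log_mul (Real.exp_pos _).ne' (H_pos ha s i).ne', Real.log_exp]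

theorem log_smooth {a : ℝ} (ha : -1 < a) (n : ℕ) : ContDiff ℝ (⊤ : ℕ∞) (fun s => Real.log (matInt4 n a s)) := by
  have e : (fun s => Real.log (matInt4 n a s)) = fun s => Real.log n.factorial +
      ∑ i ∈ Finset.range n, (-s^2 + Real.log ((OP.H (Lf ha) i).1 s)) := by
    ext s; exact log_formula ha n s
  rw [e]
  refine contDiff_const.add (ContDiff.sum fun i _ => ?_)
  exact (contDiff_id.pow 2).neg.add ((SM_smooth _).log fun s => (H_pos ha s i).ne')

def hS (ha : -1 < a) (n : ℕ) : SM := - 2 * (n : SM) * idS - 2 * OP.S (Lf ha) n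

theorem hlog_eq (n : ℕ) : hlog4 n a = (hS ha n).1 := by
  ext s
  have e : (fun s => Real.log (matInt4 n a s)) = fun s => Real.log n.factorial +
      ∑ i ∈ Finset.range n, (-s^2 + Real.log ((OP.H (Lf ha) i).1 s)) := by
    ext s; exact log_formula ha n s
  have hd : ∀ i, HasDerivAt (fun s => -s^2 + Real.log ((OP.H (Lf ha) i).1 s))
      (-2 * s - 2 * ev s (OP.al (Lf ha) i)) s := by
    intro i
    have h1 : HasDerivAt (OP.H (Lf ha) i).1 (-2 * ev s (OP.al (Lf ha) i) * ev s (OP.H (Lf ha) i)) s := by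
      have h := (SM_diff (OP.H (Lf ha) i) s).hasDerivAt
      have h2 := OP.dH (L := Lf ha) dlt Differential.mapCoeffs (Lf_unit ha)
        (fun p i => rfl) (Lf_d ha) i
      have h3 := congrArg (ev s) h2
      rw [ev_dlt, map_mul, map_mul, map_neg, map_ofNat] at h3
      rwa [h3] at h
    have h4 := (hasDerivAt_pow 2 s).neg.add (h1.log (H_pos ha s i).ne')
    refine h4.congr_deriv ?_
    have := (H_pos ha s i).ne'
    rw [← ev_apply]
    field_simp
    norm_num
    ring
  have h := (HasDerivAt.fun_sum (u := Finset.range n) fun i _ => hd i).const_add (Real.log n.factorial)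
  rw [hlog4, e, h.deriv, ← ev_apply]
  simp only [hS, OP.S, map_sub, map_mul, map_neg, map_ofNat, map_natCast, ev_idS, map_sum]
  rw [Finset.sum_sub_distrib, Finset.mul_sum]
  simp
  ring

end FIN

/-- the integral is finite and positive, its logarithm is smooth, and
`h(s)` satisfies the Painlevé IV type equation
`h‴ + 6h′² − 4(s² + 2(a−n))h′ + 4sh − 8an = 0`. -/
theorem statement5 (n : ℕ) (hn : 1 ≤ n) (a : ℝ) (ha : -1 < a) :
    (∀ s : ℝ,
      IntegrableOn
        (fun z : Fin n → ℝ => vdm z ^ 2 * ∏ i, ((z i - s) ^ a * Real.exp (-(z i ^ 2))))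
        (Set.univ.pi fun _ : Fin n => Set.Ici s) ∧
      0 < matInt4 n a s) ∧
    ContDiff ℝ (⊤ : ℕ∞) (fun s => Real.log (matInt4 n a s)) ∧
    ∀ s : ℝ,
      iteratedDeriv 3 (hlog4 n a) s + 6 * (deriv (hlog4 n a) s) ^ 2 -
        4 * (s ^ 2 + 2 * (a - n)) * deriv (hlog4 n a) s +
        4 * s * hlog4 n a s - 8 * a * n = 0 := by
  refine ⟨fun s => ⟨(FIN.matInt_formula ha n s).1, ?_⟩, FIN.log_smooth ha n, fun s => ?_⟩
  · rw [(FIN.matInt_formula ha n s).2]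
    have hf : (0 : ℝ) < n.factorial := by exact_mod_cast n.factorial_pos
    exact mul_pos hf (Finset.prod_pos fun i _ => mul_pos (Real.exp_pos _) (FIN.H_pos ha s i))
  · obtain ⟨k, rfl⟩ : ∃ k, n = k + 1 := ⟨n - 1, by omega⟩
    have h := OP.painleve (L := FIN.Lf ha) FIN.dlt Differential.mapCoeffs (FIN.Lf_unit ha)
      (fun p i => rfl) Differential.mapCoeffs_X (FIN.Lf_d ha) (FIN.cst a) FIN.idS (FIN.Lf_string ha)
      FIN.d_idS k (FIN.hS ha (k+1)) rfl
    have h2 := congrArg (FIN.ev s) h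
    simp only [map_sub, map_mul, map_add, map_pow, map_zero, map_ofNat, map_natCast, FIN.ev_cst,
      FIN.ev_idS] at h2
    have e3 : iteratedDeriv 3 (hlog4 (k+1) a) s = FIN.ev s (FIN.dlt (FIN.dlt (FIN.dlt (FIN.hS ha (k+1))))) := by
      rw [iteratedDeriv_succ, iteratedDeriv_succ, iteratedDeriv_one, FIN.hlog_eq ha]; rfl
    have e1 : deriv (hlog4 (k+1) a) s = FIN.ev s (FIN.dlt (FIN.hS ha (k+1))) := by
      rw [FIN.hlog_eq ha]; rfl
    have e0 : hlog4 (k+1) a s = FIN.ev s (FIN.hS ha (k+1)) := by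
      rw [FIN.hlog_eq ha]; rfl
    rw [e3, e1, e0]
    exact h2

end
end

section
/- Let n ≥ 1 be an integer and a, b > −1 real numbers. Define k(s) := s · (d/ds) log ∫_{[0,s]^n} Δ_n(z)² ∏_{i=1}^n (s − z_i)^b z_i^a e^{−z_i} dz for s > 0. Then k satisfies the Painlevé V type equation k‴ + k″/s + (6/s)(k′)² − (4/s²) k k′ − ( s² − 2s(2n + a − b) + (a+b)² ) k′/s² + ( s − 2n − a + b ) k/s² − (bn/s²)(s + a + b) = 0 for all s > 0. -/
open MeasureTheory Filter Real
open scoped BigOperators Topology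

noncomputable section

/-- The matrix-model integral `∫_{[0,s]^n} Δ_n(z)² ∏ (s − z_i)^b z_i^a e^{−z_i} dz`. -/
def matInt5 (n : ℕ) (a b : ℝ) (s : ℝ) : ℝ :=
  ∫ z in Set.univ.pi fun _ : Fin n => Set.Icc 0 s,
    vdm z ^ 2 * ∏ i, ((s - z i) ^ b * z i ^ a * Real.exp (-z i))

/-- `k(s) = s (d/ds) log` of the above integral. -/
def klog5 (n : ℕ) (a b : ℝ) (s : ℝ) : ℝ :=
  s * deriv (fun t => Real.log (matInt5 n a b t)) s

namespace P5
open MvPolynomial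

def Lf {n : ℕ} (μ : ℕ → ℝ) : MvPolynomial (Fin n) ℝ →ₗ[ℝ] ℝ :=
  (MvPolynomial.basisMonomials (Fin n) ℝ).constr ℝ (fun m => ∏ i, μ (m i))

lemma Lf_monomial {n : ℕ} (μ : ℕ → ℝ) (m : Fin n →₀ ℕ) (c : ℝ) :
    Lf μ (monomial m c) = c * ∏ i, μ (m i) := by
  have h : (monomial m c : MvPolynomial (Fin n) ℝ)
      = c • (MvPolynomial.basisMonomials (Fin n) ℝ) m := by
    simp [MvPolynomial.smul_monomial]
  rw [h, map_smul, Lf, Module.Basis.constr_basis, smul_eq_mul]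

def vdP (n : ℕ) : MvPolynomial (Fin n) ℝ :=
  ∏ i : Fin n, ∏ j ∈ Finset.Ioi i, (X i - X j)

def pw (n k : ℕ) : MvPolynomial (Fin n) ℝ := ∑ i : Fin n, X i ^ k

def dV (n k : ℕ) : Derivation ℝ (MvPolynomial (Fin n) ℝ) (MvPolynomial (Fin n) ℝ) :=
  ∑ i : Fin n, (X i ^ (k+1) - X i ^ (k+2) : MvPolynomial (Fin n) ℝ) • pderiv i

lemma dV_apply (n k : ℕ) (f : MvPolynomial (Fin n) ℝ) :
    dV n k f = ∑ i : Fin n, (X i ^ (k+1) - X i ^ (k+2)) * pderiv i f := by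
  rw [dV, ← Derivation.coeFnAddMonoidHom_apply, map_sum, Finset.sum_apply]
  rfl

lemma dV_X (n k : ℕ) (i : Fin n) :
    dV n k (X i) = X i ^ (k+1) - X i ^ (k+2) := by
  rw [dV_apply, Finset.sum_eq_single i]
  · simp
  · intro j _ hj
    rw [pderiv_X_of_ne hj.symm, mul_zero]
  · simp

lemma dV_pw (n k m : ℕ) :
    dV n k (pw n (m+1)) = (m+1 : ℝ) • (pw n (m+k+1) - pw n (m+k+2)) := by
  simp only [pw, map_sum, Derivation.leibniz_pow, dV_X, ← Finset.sum_sub_distrib,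
    Finset.smul_sum]
  refine Finset.sum_congr rfl fun i _ => ?_
  simp only [smul_eq_mul, nsmul_eq_mul, MvPolynomial.smul_eq_C_mul]
  simp only [map_add, map_natCast, map_one]
  push_cast
  ring

lemma Lf_X_pow_mul_monomial {n : ℕ} (μ : ℕ → ℝ) (m : Fin n →₀ ℕ) (c : ℝ) (i : Fin n) (k : ℕ) :
    Lf μ (X i ^ k * monomial m c) = c * (μ (m i + k) * ∏ j ∈ Finset.univ.erase i, μ (m j)) := by
  rw [X_pow_eq_monomial, monomial_mul, Lf_monomial, one_mul,
    ← Finset.mul_prod_erase _ _ (Finset.mem_univ i)]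
  congr 2
  · simp [add_comm]
  · refine Finset.prod_congr rfl fun j hj => ?_
    have : i ≠ j := (Finset.ne_of_mem_erase hj).symm
    simp [Finsupp.single_apply, this]

lemma ibp1 {n : ℕ} (μ : ℕ → ℝ) (a b s : ℝ)
    (H : ∀ m : ℕ, (m + 1 + a) * μ m - (m + 2 + a + b + s) * μ (m+1) + s * μ (m+2) = 0)
    (i : Fin n) (k : ℕ) (f : MvPolynomial (Fin n) ℝ) :
    Lf μ ((X i ^ (k+1) - X i ^ (k+2)) * pderiv i f +
      (C (k+1+a) * X i ^ k - C (k+2+a+b+s) * X i ^ (k+1) + C s * X i ^ (k+2)) * f) = 0 := by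
  induction f using MvPolynomial.induction_on' with
  | add p q hp hq =>
    rw [← add_zero (0:ℝ)]
    nth_rewrite 1 [← hp]
    nth_rewrite 1 [← hq]
    rw [← map_add]
    congr 1
    rw [map_add]; ring
  | monomial m c =>
    have e : ∀ (r : ℝ) (j : ℕ), Lf μ (C r * X i ^ j * monomial m c)
        = r * (c * (μ (m i + j) * ∏ j ∈ Finset.univ.erase i, μ (m j))) := by
      intro r j
      rw [mul_assoc, ← smul_eq_C_mul, map_smul, Lf_X_pow_mul_monomial, smul_eq_mul]
    have e2 : ∀ j : ℕ, Lf μ (X i ^ (j+1) * pderiv i (monomial m c))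
        = (m i : ℝ) * (c * (μ (m i + j) * ∏ j ∈ Finset.univ.erase i, μ (m j))) := by
      intro j
      rw [pderiv_monomial, Lf_X_pow_mul_monomial]
      rcases Nat.eq_zero_or_pos (m i) with h | h
      · simp [h]
      · have h1 : (m - Finsupp.single i 1 : Fin n →₀ ℕ) i + (j+1) = m i + j := by
          simp; omega
        rw [h1]
        have : ∏ j ∈ Finset.univ.erase i, μ ((m - Finsupp.single i 1 : Fin n →₀ ℕ) j)
            = ∏ j ∈ Finset.univ.erase i, μ (m j) := by
          refine Finset.prod_congr rfl fun j hj => ?_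
          have : i ≠ j := (Finset.ne_of_mem_erase hj).symm
          simp [Finsupp.single_apply, this]
        rw [this]; ring
    rw [map_add, sub_mul, map_sub, e2 k, e2 (k+1), add_mul, sub_mul, map_add, map_sub, e, e, e]
    have := H (m i + k)
    push_cast at this
    simp only [← add_assoc] at this ⊢
    linear_combination (c * ∏ j ∈ Finset.univ.erase i, μ (m j)) * this

lemma ibp {n : ℕ} (μ : ℕ → ℝ) (a b s : ℝ)
    (H : ∀ m : ℕ, (m + 1 + a) * μ m - (m + 2 + a + b + s) * μ (m+1) + s * μ (m+2) = 0)
    (k : ℕ) (f : MvPolynomial (Fin n) ℝ) :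
    Lf μ (dV n k f +
      (C (k+1+a) * pw n k - C (k+2+a+b+s) * pw n (k+1) + C s * pw n (k+2)) * f) = 0 := by
  have := Finset.sum_eq_zero (fun i (_ : i ∈ Finset.univ) => ibp1 (n := n) μ a b s H i k f)
  rw [← map_sum] at this
  rw [← this, dV_apply]
  congr 1
  rw [Finset.sum_add_distrib, ← Finset.sum_mul, Finset.sum_add_distrib, Finset.sum_sub_distrib,
    ← Finset.mul_sum, ← Finset.mul_sum, ← Finset.mul_sum]
  rfl

lemma deriv_prod_aux {R : Type*} [CommRing R] [Algebra ℝ R] (D : Derivation ℝ R R) {ι : Type*}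
    (S : Finset ι) (f q : ι → R) (h : ∀ i ∈ S, D (f i) = f i * q i) :
    D (∏ i ∈ S, f i) = (∏ i ∈ S, f i) * ∑ i ∈ S, q i := by
  classical
  induction S using Finset.induction_on with
  | empty => simp
  | insert i S hi ih =>
    rw [Finset.prod_insert hi, Finset.sum_insert hi, Derivation.leibniz,
      ih (fun j hj => h j (Finset.mem_insert_of_mem hj)), h i (Finset.mem_insert_self _ _)]
    simp only [smul_eq_mul]; ring

lemma dV_vdP (n k : ℕ) (q : Fin n → Fin n → MvPolynomial (Fin n) ℝ)
    (h : ∀ i j, (X i ^ (k+1) - X i ^ (k+2)) - (X j ^ (k+1) - X j ^ (k+2)) = (X i - X j) * q i j) :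
    dV n k (vdP n) = vdP n * ∑ i, ∑ j ∈ Finset.Ioi i, q i j := by
  refine deriv_prod_aux _ _ _ _ fun i _ => deriv_prod_aux _ _ _ _ fun j _ => ?_
  rw [map_sub, dV_X, dV_X, h]

lemma sum_Ioi {R : Type*} [CommRing R] (n : ℕ) (q : Fin n → Fin n → R) (h : ∀ i j, q i j = q j i) :
    2 * ∑ i, ∑ j ∈ Finset.Ioi i, q i j = ∑ i, ∑ j, q i j - ∑ i, q i i := by
  have h1 : ∀ i : Fin n, ∑ j, q i j = ∑ j ∈ Finset.Ioi i, q i j + q i i + ∑ j ∈ Finset.Iio i, q i j := by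
    intro i
    have e : (Finset.univ : Finset (Fin n)) = (Finset.Ioi i ∪ {i}) ∪ Finset.Iio i := by
      ext j; simp only [Finset.mem_univ, Finset.mem_union, Finset.mem_Ioi, Finset.mem_singleton, Finset.mem_Iio, true_iff]; rcases lt_trichotomy j i with h | h | h <;> simp [h]
    rw [e, Finset.sum_union, Finset.sum_union]
    · simp
    · simp
    · rw [Finset.disjoint_left]; intro j; simp only [Finset.mem_union, Finset.mem_Ioi, Finset.mem_singleton, Finset.mem_Iio]; rintro (h | h) <;> order
  have h2 : ∑ i, ∑ j ∈ Finset.Iio i, q i j = ∑ i, ∑ j ∈ Finset.Ioi i, q i j := by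
    rw [Finset.sum_comm' (t' := Finset.univ) (s' := fun j => Finset.Ioi j)]
    · exact Finset.sum_congr rfl fun i _ => Finset.sum_congr rfl fun j _ => h _ _
    · simp
  simp only [h1, Finset.sum_add_distrib, h2]
  ring

lemma pw_zero (n : ℕ) : pw n 0 = C (n:ℝ) := by simp [pw]

lemma dV0_vdP (n : ℕ) : 2 * dV n 0 (vdP n) = vdP n * (C ((n:ℝ)*(n-1)) - C (2*((n:ℝ)-1)) * pw n 1) := by
  rw [dV_vdP n 0 (fun i j => 1 - (X i + X j)) (by intro i j; ring), mul_left_comm, sum_Ioi _ _ (by intro i j; ring)]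
  simp only [Finset.sum_sub_distrib, Finset.sum_add_distrib, pw, pow_one, Finset.sum_const,
    Finset.card_univ, Fintype.card_fin, nsmul_eq_mul, map_mul, map_sub, map_natCast, map_one, ← Finset.mul_sum, map_ofNat]
  ring

lemma dV1_vdP (n : ℕ) : 2 * dV n 1 (vdP n) = vdP n * (C (2*((n:ℝ)-1)) * pw n 1
    - C (2*((n:ℝ)-1)) * pw n 2 - pw n 1 ^ 2 + pw n 2) := by
  rw [dV_vdP n 1 (fun i j => (X i + X j) - (X i ^ 2 + X j ^ 2 + X i * X j)) (by intro i j; ring), mul_left_comm, sum_Ioi _ _ (by intro i j; ring)]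
  simp only [Finset.sum_sub_distrib, Finset.sum_add_distrib, pw, pow_one, Finset.sum_const,
    Finset.card_univ, Fintype.card_fin, nsmul_eq_mul, map_mul, map_sub, map_natCast, map_one, ← Finset.mul_sum, ← Finset.sum_mul, map_ofNat, ← pow_two]
  ring

def Ev (n : ℕ) (μ : ℕ → ℝ) (f : MvPolynomial (Fin n) ℝ) : ℝ := Lf μ (vdP n ^ 2 * f)

lemma Ev_add (n : ℕ) (μ : ℕ → ℝ) (f g : MvPolynomial (Fin n) ℝ) :
    Ev n μ (f + g) = Ev n μ f + Ev n μ g := by simp [Ev, mul_add]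
lemma Ev_sub (n : ℕ) (μ : ℕ → ℝ) (f g : MvPolynomial (Fin n) ℝ) :
    Ev n μ (f - g) = Ev n μ f - Ev n μ g := by simp [Ev, mul_sub]
lemma Ev_C (n : ℕ) (μ : ℕ → ℝ) (c : ℝ) (f : MvPolynomial (Fin n) ℝ) :
    Ev n μ (C c * f) = c * Ev n μ f := by
  rw [Ev, mul_left_comm, ← smul_eq_C_mul, map_smul, smul_eq_mul, Ev]

lemma vir0 {n : ℕ} (μ : ℕ → ℝ) (a b s : ℝ)
    (H : ∀ m : ℕ, (m + 1 + a) * μ m - (m + 2 + a + b + s) * μ (m+1) + s * μ (m+2) = 0)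
    (f : MvPolynomial (Fin n) ℝ) :
    Ev n μ (dV n 0 f + (C (n*(n+a)) - C (2*n+a+b+s) * pw n 1 + C s * pw n 2) * f) = 0 := by
  rw [← ibp μ a b s H 0 (vdP n ^ 2 * f), Ev]
  congr 1
  rw [Derivation.leibniz, Derivation.leibniz_pow, pw_zero]
  have := dV0_vdP n
  simp only [smul_eq_mul, nsmul_eq_mul, Nat.cast_ofNat, Nat.cast_zero, map_mul, map_add, map_sub, map_natCast, map_one, map_ofNat, map_zero] at this ⊢
  linear_combination (-f * vdP n) * this

lemma vir1 {n : ℕ} (μ : ℕ → ℝ) (a b s : ℝ)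
    (H : ∀ m : ℕ, (m + 1 + a) * μ m - (m + 2 + a + b + s) * μ (m+1) + s * μ (m+2) = 0)
    (f : MvPolynomial (Fin n) ℝ) :
    Ev n μ (dV n 1 f + (C (2*n+a) * pw n 1 - C (2*n+a+b+s) * pw n 2 - pw n 1 ^ 2 + C s * pw n 3) * f) = 0 := by
  rw [← ibp μ a b s H 1 (vdP n ^ 2 * f), Ev]
  congr 1
  rw [Derivation.leibniz, Derivation.leibniz_pow]
  have := dV1_vdP n
  simp only [smul_eq_mul, nsmul_eq_mul, Nat.cast_ofNat, Nat.cast_one, map_mul, map_add, map_sub, map_natCast, map_one, map_ofNat, map_zero] at this ⊢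
  linear_combination (-f * vdP n) * this

lemma virs {n : ℕ} (μ : ℕ → ℝ) (a b s : ℝ)
    (H : ∀ m : ℕ, (m + 1 + a) * μ m - (m + 2 + a + b + s) * μ (m+1) + s * μ (m+2) = 0) :
    s * Ev n μ (pw n 2) = (2*n+a+b+s) * Ev n μ (pw n 1) - n*(n+a) * Ev n μ 1 ∧
    s * Ev n μ (pw n 1 * pw n 2) = (2*n+a+b+s) * Ev n μ (pw n 1 ^ 2) - n*(n+a) * Ev n μ (pw n 1)
      - (Ev n μ (pw n 1) - Ev n μ (pw n 2)) ∧
    s * Ev n μ (pw n 2 ^ 2) = (2*n+a+b+s) * Ev n μ (pw n 1 * pw n 2) - n*(n+a) * Ev n μ (pw n 2)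
      - 2 * (Ev n μ (pw n 2) - Ev n μ (pw n 3)) ∧
    s * Ev n μ (pw n 3) = -(2*n+a) * Ev n μ (pw n 1) + (2*n+a+b+s) * Ev n μ (pw n 2)
      + Ev n μ (pw n 1 ^ 2) ∧
    s * Ev n μ (pw n 1 * pw n 3) = -(2*n+a) * Ev n μ (pw n 1 ^ 2)
      + (2*n+a+b+s) * Ev n μ (pw n 1 * pw n 2)
      + Ev n μ (pw n 1 ^ 3) - (Ev n μ (pw n 2) - Ev n μ (pw n 3)) := by
  have d : ∀ k, dV n k (1 : MvPolynomial (Fin n) ℝ) = 0 := fun k => by simp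
  have h1 := vir0 μ a b s H (1 : MvPolynomial (Fin n) ℝ)
  have h2 := vir0 μ a b s H (pw n 1)
  have h3 := vir0 μ a b s H (pw n 2)
  have h4 := vir1 μ a b s H (1 : MvPolynomial (Fin n) ℝ)
  have h5 := vir1 μ a b s H (pw n 1)
  rw [d, zero_add] at h1 h4
  rw [dV_pw n _ 0] at h2 h5
  rw [dV_pw n _ 1] at h3
  simp only [smul_eq_C_mul, sub_mul, add_mul, mul_assoc, Ev_add, Ev_sub, Ev_C, ← pow_two, zero_add, mul_one, add_zero, Nat.reduceAdd, Nat.cast_zero, Nat.cast_one, one_mul] at h1 h2 h3 h4 h5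
  have q1 : pw n 1 ^ 2 * pw n 1 = pw n 1 ^ 3 := by ring
  have q2 : pw n 2 * pw n 1 = pw n 1 * pw n 2 := by ring
  have q3 : pw n 3 * pw n 1 = pw n 1 * pw n 3 := by ring
  rw [q2] at h2
  rw [q1, q2, q3] at h5
  refine ⟨?_, ?_, ?_, ?_, ?_⟩
  · have q4 : Ev n μ (C ((n:ℝ) * (n + a))) = n * (n + a) * Ev n μ 1 := by
      rw [← Ev_C, mul_one]
    rw [q4] at h1
    linear_combination h1
  · linear_combination h2
  · linear_combination h3
  · linear_combination h4
  · linear_combination h5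

end P5


namespace P5
open MvPolynomial

def Bm (n : ℕ) (l : ℕ → ℕ) : Matrix (Fin n) (Fin n) (MvPolynomial (Fin n) ℝ) :=
  Matrix.of fun i j => X i ^ (n - 1 - (j:ℕ) + l j)

open Classical in
def Bd (n : ℕ) (l : ℕ → ℕ) : MvPolynomial (Fin n) ℝ :=
  if ∀ r, n ≤ r → l r = 0 then (Bm n l).det else 0

lemma Bd_of {n : ℕ} {l : ℕ → ℕ} (h : ∀ r, n ≤ r → l r = 0) : Bd n l = (Bm n l).det := if_pos h
lemma Bd_not {n : ℕ} {l : ℕ → ℕ} (h : ¬ ∀ r, n ≤ r → l r = 0) : Bd n l = 0 := if_neg h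

lemma vdP_eq (n : ℕ) : vdP n = Bd n 0 := by
  rw [Bd_of (by simp)]
  have := Matrix.det_projVandermonde (R := MvPolynomial (Fin n) ℝ) (fun _ : Fin n => 1) X
  simp only [one_mul, mul_one] at this
  rw [vdP, ← this]
  congr 1
  ext i j
  simp only [Matrix.projVandermonde_apply, Bm, Matrix.of_apply, Fin.rev, one_pow, one_mul, Pi.zero_apply]
  congr 2
  simp; omega

lemma Bm_det (n : ℕ) (l : ℕ → ℕ) : (Bm n l).det = ∑ σ : Equiv.Perm (Fin n),
    (Equiv.Perm.sign σ : ℤ) • ∏ i, X (σ i) ^ (n - 1 - (i:ℕ) + l i) := by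
  rw [Matrix.det_apply]; rfl

lemma pw_Bm (n k : ℕ) (l : ℕ → ℕ) : pw n k * (Bm n l).det
    = ∑ r : Fin n, (Bm n (l + Pi.single (r:ℕ) k)).det := by
  simp only [Bm_det]
  rw [Finset.sum_comm, Finset.mul_sum]
  refine Finset.sum_congr rfl fun σ _ => ?_
  rw [← Finset.smul_sum, mul_smul_comm]
  congr 1
  rw [pw, ← Equiv.sum_comp σ, Finset.sum_mul]
  refine Finset.sum_congr rfl fun r _ => ?_
  rw [← Finset.mul_prod_erase _ _ (Finset.mem_univ r), ← Finset.mul_prod_erase _ _ (Finset.mem_univ r),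
    ← mul_assoc, ← pow_add]
  congr 1
  · simp; ring
  · refine Finset.prod_congr rfl fun j hj => ?_
    have : (j:ℕ) ≠ r := fun h => Finset.ne_of_mem_erase hj (Fin.ext h)
    simp [Pi.single_apply, this]

lemma pw_Bd (n k m : ℕ) (hk : k ≠ 0) (hm : n ≤ m) (l : ℕ → ℕ) : pw n k * Bd n l
    = ∑ r ∈ Finset.range m, Bd n (l + Pi.single r k) := by
  by_cases h : ∀ r, n ≤ r → l r = 0
  · rw [Bd_of h, pw_Bm, Fin.sum_univ_eq_sum_range (fun r : ℕ => (Bm n (l + Pi.single (M := fun _ => ℕ) r k)).det)]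
    rw [← Finset.sum_subset (Finset.range_mono hm)]
    · refine Finset.sum_congr rfl fun r hr => (Bd_of fun t ht => ?_).symm
      have : t ≠ r := by have := Finset.mem_range.1 hr; omega
      simp [h t ht, this]
    · intro r _ hr
      refine Bd_not fun h' => ?_
      have := h' r (by simpa using hr)
      simp at this; omega
  · rw [Bd_not h, mul_zero]
    symm
    refine Finset.sum_eq_zero fun r _ => Bd_not fun h' => h fun t ht => ?_
    have := h' t ht
    simp at this; omega

lemma Bd_zero (n : ℕ) (l : ℕ → ℕ) (r t : ℕ) (hr : r < t) (h : l t + r = l r + t) : Bd n l = 0 := by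
  by_cases hs : ∀ r, n ≤ r → l r = 0
  · rw [Bd_of hs]
    have ht : t < n := by
      by_contra hc
      have := hs t (by omega); omega
    refine Matrix.det_zero_of_column_eq (i := ⟨r, by omega⟩) (j := ⟨t, ht⟩) (by simp; omega) fun i => ?_
    simp only [Bm, Matrix.of_apply]
    congr 1
    omega
  · exact Bd_not hs

lemma Bd_swap (n : ℕ) (l l' : ℕ → ℕ) (r : ℕ) (h1 : l' r + 1 = l (r+1)) (h2 : l' (r+1) = l r + 1)
    (h3 : ∀ t, t ≠ r → t ≠ r+1 → l' t = l t) : Bd n l = - Bd n l' := by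
  by_cases hr : r + 1 < n
  · have iff : (∀ t, n ≤ t → l t = 0) ↔ (∀ t, n ≤ t → l' t = 0) := by
      constructor <;> intro h t ht
      · rw [h3 t (by omega) (by omega), h t ht]
      · rw [← h3 t (by omega) (by omega), h t ht]
    by_cases hs : ∀ t, n ≤ t → l t = 0
    · rw [Bd_of hs, Bd_of (iff.1 hs)]
      set i : Fin n := ⟨r, by omega⟩
      set j : Fin n := ⟨r+1, hr⟩
      have hij : i ≠ j := by simp [i, j]
      have := Matrix.det_permute' (Equiv.swap i j) (Bm n l')
      rw [Equiv.Perm.sign_swap hij] at this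
      simp only [Units.val_neg, Units.val_one, Int.cast_neg, Int.cast_one, neg_mul, one_mul] at this
      rw [← this]
      congr 1
      ext p q : 2
      simp only [Bm, Matrix.of_apply, Matrix.submatrix_apply, id]
      congr 1
      by_cases hqi : q = i
      · subst hqi; rw [Equiv.swap_apply_left]; change X p ^ (n - 1 - r + l r) = X p ^ (n - 1 - (r+1) + l' (r+1)); congr 1; omega
      · by_cases hqj : q = j
        · subst hqj; rw [Equiv.swap_apply_right]; change X p ^ (n - 1 - (r+1) + l (r+1)) = X p ^ (n - 1 - r + l' r); congr 1; omega
        · rw [Equiv.swap_apply_of_ne_of_ne hqi hqj, h3]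
          · intro h; exact hqi (Fin.ext h)
          · intro h; exact hqj (Fin.ext h)
    · rw [Bd_not hs, Bd_not (fun h => hs (iff.2 h)), neg_zero]
  · rw [Bd_not, Bd_not, neg_zero]
    · intro h; have := h (r+1) (by omega); omega
    · intro h; have := h (r+1) (by omega); omega

def lam (L : List ℕ) : ℕ → ℕ := fun r => L.getD r 0

def S (n : ℕ) (L : List ℕ) : MvPolynomial (Fin n) ℝ := Bd n (lam L)

lemma pw_S (n k : ℕ) (hk : k ≠ 0) (l : ℕ → ℕ) (h : ∀ r, 3 ≤ r → l r = 0 ∧ (k ≤ r) ∧ l (r - k) = 0) :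
    pw n k * Bd n l = Bd n (l + Pi.single 0 k) + Bd n (l + Pi.single 1 k) + Bd n (l + Pi.single 2 k) := by
  rw [pw_Bd n k (n+3) hk (by omega), Finset.sum_range_succ', Finset.sum_range_succ',
    Finset.sum_range_succ', Finset.sum_eq_zero]
  · simp only [zero_add, Nat.reduceAdd]; ring
  · intro r _
    obtain ⟨h1, h2, h3⟩ := h (r+3) (by omega)
    refine Bd_zero n _ (r+3-k) (r+3) (by omega) ?_
    have : r + 3 - k ≠ r + 3 := by omega
    simp only [Pi.add_apply, Pi.single_apply, this, if_true, if_false, h1, h3]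
    omega

lemma lam_add (l : ℕ → ℕ) (L : List ℕ) (h0 : l 0 = L.getD 0 0) (h1 : l 1 = L.getD 1 0) (h2 : l 2 = L.getD 2 0)
  (h3 : ∀ r, l (r+3) = L.getD (r+3) 0) : l = lam L := by
  funext r
  rcases r with _ | _ | _ | r
  · exact h0
  · exact h1
  · exact h2
  · exact h3 r


lemma sw0 (n x y : ℕ) (z : ℕ) : S n [x, y+1, z] = - S n [y, x+1, z] := by
  refine Bd_swap n _ _ 0 (by simp [lam]) (by simp [lam]) ?_
  intro t h1 h2
  rcases t with _ | _ | t
  · omega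
  · omega
  · simp [lam]

lemma sw1 (n x y : ℕ) (z : ℕ) : S n [z, x, y+1] = - S n [z, y, x+1] := by
  refine Bd_swap n _ _ 1 (by simp [lam]) (by simp [lam]) ?_
  intro t h1 h2
  rcases t with _ | _ | _ | t
  · simp [lam]
  · omega
  · omega
  · simp [lam]

lemma sz0 (n x z : ℕ) : S n [x, x+1, z] = 0 := Bd_zero n _ 0 1 (by simp) (by simp [lam])
lemma sz1 (n x z : ℕ) : S n [z, x, x+1] = 0 := Bd_zero n _ 1 2 (by simp) (by simp [lam])

lemma pw_S3 (n k x y z : ℕ) (hk : k ≠ 0) (hk3 : k ≤ 3) (hx : 3 ≤ k → x = 0) (hy : 2 ≤ k → y = 0)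
    (hz : z = 0) :
    pw n k * S n [x, y, z] = S n [x + k, y, z] + S n [x, y+k, z] + S n [x, y, z+k] := by
  unfold S
  rw [pw_S n k hk]
  · congr 2
    · congr 1
      congr 1
      refine lam_add _ _ ?_ ?_ ?_ ?_ <;> simp [lam]
    · congr 1
      refine lam_add _ _ ?_ ?_ ?_ ?_ <;> simp [lam]
    · refine lam_add _ _ ?_ ?_ ?_ ?_ <;> simp [lam]
  · intro r hr
    refine ⟨?_, by omega, ?_⟩
    · obtain ⟨t, rfl⟩ : ∃ t, r = t + 3 := ⟨r - 3, by omega⟩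
      simp [lam]
    · obtain ⟨t, rfl⟩ : ∃ t, r = t + k := ⟨r - k, by omega⟩
      rw [Nat.add_sub_cancel]
      rcases t with _ | _ | _ | t
      · simpa [lam] using hx (by omega)
      · simpa [lam] using hy (by omega)
      · simpa [lam] using hz
      · simp [lam]

lemma schur (n : ℕ) : 
    pw n 1 * S n [0,0,0] = S n [1,0,0] ∧
    pw n 1 ^ 2 * S n [0,0,0] + pw n 2 * S n [0,0,0] = 2 * S n [2,0,0] ∧
    pw n 1 ^ 2 * S n [0,0,0] - pw n 2 * S n [0,0,0] = 2 * S n [1,1,0] ∧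
    pw n 1 ^ 3 * S n [0,0,0] - pw n 3 * S n [0,0,0] = 3 * S n [2,1,0] ∧
    pw n 1 ^ 4 * S n [0,0,0] + 3 * (pw n 2 ^ 2 * S n [0,0,0]) - 4 * (pw n 1 * pw n 3 * S n [0,0,0]) = 12 * S n [2,2,0] := by
  have p1_0 := pw_S3 n 1 0 0 0 (by simp) (by simp) (by simp) (by simp) rfl
  have p1_1 := pw_S3 n 1 1 0 0 (by simp) (by simp) (by simp) (by simp) rfl
  have p1_2 := pw_S3 n 1 2 0 0 (by simp) (by simp) (by simp) (by simp) rfl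
  have p1_11 := pw_S3 n 1 1 1 0 (by simp) (by simp) (by simp) (by simp) rfl
  have p1_3 := pw_S3 n 1 3 0 0 (by simp) (by simp) (by simp) (by simp) rfl
  have p1_21 := pw_S3 n 1 2 1 0 (by simp) (by simp) (by simp) (by simp) rfl
  have p2_0 := pw_S3 n 2 0 0 0 (by simp) (by simp) (by simp) (by simp) rfl
  have p2_1 := pw_S3 n 2 1 0 0 (by simp) (by simp) (by simp) (by simp) rfl
  have p2_2 := pw_S3 n 2 2 0 0 (by simp) (by simp) (by simp) (by simp) rfl
  have p3_0 := pw_S3 n 3 0 0 0 (by simp) (by simp) (by simp) (by simp) rfl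
  simp only [Nat.reduceAdd, zero_add] at *
  rw [sz0 n 0 0, sz1 n 0 0] at p1_0
  rw [sz1 n 0 1] at p1_1
  rw [sz1 n 0 2] at p1_2
  rw [sz0 n 1 0] at p1_11
  rw [sz1 n 0 3] at p1_3
  rw [sw0 n 0 1 0, sw1 n 0 1 0, sz0 n 0 1] at p2_0
  rw [sz0 n 1 0, sw1 n 0 1 1] at p2_1
  rw [sw1 n 0 1 2] at p2_2
  rw [sw0 n 0 2 0, sw1 n 0 2 0, sw0 n 0 1 1] at p3_0
  simp only [Nat.reduceAdd, zero_add, add_zero, neg_zero, neg_neg] at *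
  refine ⟨p1_0, ?_, ?_, ?_, ?_⟩
  · linear_combination pw n 1 * p1_0 + p1_1 + p2_0
  · linear_combination pw n 1 * p1_0 + p1_1 - p2_0
  · linear_combination pw n 1 ^2 * p1_0 + pw n 1 * p1_1 + p1_2 + p1_11 - p3_0
  · linear_combination (pw n 1 ^ 2 + 3 * pw n 2) * (pw n 1 * p1_0 + p1_1 + p2_0)
      - 4 * pw n 1 * pw n 2 * p1_0 - 4 * pw n 1 * (p1_2 + p2_1 + p3_0) + 6 * pw n 1 * p1_2
      + 6 * (p1_21 + p2_2 - p1_3)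

end P5


namespace P5
open MvPolynomial

lemma Lf_prod {n : ℕ} (μ : ℕ → ℝ) (g : Fin n → ℕ) : Lf μ (∏ i, X i ^ g i) = ∏ i, μ (g i) := by
  have : (∏ i, X i ^ g i : MvPolynomial (Fin n) ℝ) = monomial (Finsupp.equivFunOnFinite.symm g) 1 := by
    rw [monomial_eq, Finsupp.prod_fintype _ _ (by simp)]; simp
  rw [this, Lf_monomial]; simp

def Hm (n : ℕ) (μ : ℕ → ℝ) (l : ℕ → ℕ) : Matrix (Fin n) (Fin n) ℝ :=
  Matrix.of fun i j => μ ((n - 1 - (i:ℕ)) + (n - 1 - (j:ℕ) + l j))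

lemma andreief (n : ℕ) (μ : ℕ → ℝ) (l : ℕ → ℕ) :
    Lf μ ((Bm n 0).det * (Bm n l).det) = (n.factorial : ℝ) * (Hm n μ l).det := by
  rw [Bm_det, Bm_det, Finset.sum_mul, map_sum]
  have key : ∀ σ : Equiv.Perm (Fin n), Lf μ (((Equiv.Perm.sign σ : ℤ) • ∏ i, X (σ i) ^ (n - 1 - (i:ℕ) + (0 : ℕ → ℕ) i)) *
      ∑ τ : Equiv.Perm (Fin n), (Equiv.Perm.sign τ : ℤ) • ∏ i, X (τ i) ^ (n - 1 - (i:ℕ) + l i))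
      = (Hm n μ l).det := by
    intro σ
    rw [← Matrix.det_transpose, Matrix.det_apply', Finset.mul_sum, map_sum]
    rw [← Equiv.sum_comp ((Equiv.mulRight σ⁻¹).trans (Equiv.inv (Equiv.Perm (Fin n))))]
    refine Finset.sum_congr rfl fun ρ _ => ?_
    have hτ : ((Equiv.mulRight σ⁻¹).trans (Equiv.inv (Equiv.Perm (Fin n)))) ρ = (ρ * σ⁻¹)⁻¹ := rfl
    rw [hτ]
    have r : ∀ (τ : Equiv.Perm (Fin n)) (g : Fin n → ℕ),
        (∏ i, X (τ i) ^ g i : MvPolynomial (Fin n) ℝ) = ∏ i, X i ^ g (τ⁻¹ i) := by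
      intro τ g
      rw [← Equiv.prod_comp τ (fun i => (X i ^ g (τ⁻¹ i) : MvPolynomial (Fin n) ℝ))]
      simp
    rw [r σ (fun i => n - 1 - (i:ℕ) + (0 : ℕ → ℕ) i), r _ (fun i => n - 1 - (i:ℕ) + l i)]
    rw [smul_mul_smul_comm, ← Finset.prod_mul_distrib, map_zsmul]
    simp only [← pow_add, inv_inv]
    rw [Lf_prod, ← Equiv.prod_comp σ]
    have hs : ((Equiv.Perm.sign σ : ℤ) * (Equiv.Perm.sign (ρ * σ⁻¹)⁻¹ : ℤ)) = (Equiv.Perm.sign ρ : ℤ) := by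
      rw [Equiv.Perm.sign_inv, Equiv.Perm.sign_mul, Equiv.Perm.sign_inv, mul_comm (Equiv.Perm.sign ρ)]
      push_cast
      rw [← mul_assoc, Int.units_coe_mul_self, one_mul]
    rw [hs, zsmul_eq_mul]
    congr 1
    refine Finset.prod_congr rfl fun i _ => ?_
    simp [Hm]
  rw [Finset.sum_congr rfl fun σ _ => key σ]
  simp [Fintype.card_perm]

lemma plucker {ι : Type*} [Fintype ι] [DecidableEq ι] (M : Matrix ι ι ℝ) (i j : ι) (hij : i ≠ j)
    (hM : M.det ≠ 0) (c d : ι → ℝ) (f : (ι → ℝ) → (ι → ℝ) → ℝ)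
    (hf : ∀ u v, f u v = ((M.updateCol i u).updateCol j v).det) (A B : ι → ℝ)
    (hA : A = fun k => M k j) (hB : B = fun k => M k i) :
    f B A * f d c - f c A * f d B + f d A * f c B = 0 := by
  have hu : IsUnit M.det := isUnit_iff_ne_zero.2 hM
  have ex : ∀ c : ι → ℝ, ∃ γ : ι → ℝ, c = fun k => ∑ t, γ t • M k t := by
    intro c
    refine ⟨M⁻¹.mulVec c, ?_⟩
    have : M.mulVec (M⁻¹.mulVec c) = c := by
      rw [Matrix.mulVec_mulVec, Matrix.mul_nonsing_inv _ hu, Matrix.one_mulVec]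
    nth_rewrite 1 [← this]
    funext k
    simp only [Matrix.mulVec, dotProduct, smul_eq_mul]
    exact Finset.sum_congr rfl fun t _ => mul_comm _ _
  obtain ⟨γ, hγ⟩ := ex c
  obtain ⟨δ, hδ⟩ := ex d
  have colj : ∀ u, ((M.updateCol i u).updateCol j A) = M.updateCol i u := by
    intro u
    ext p q
    by_cases hq : q = j
    · subst hq; simp [hA, Matrix.updateCol_apply, hij.symm]
    · simp [Matrix.updateCol_apply, hq]
  have fA : ∀ u γ : ι → ℝ, (u = fun k => ∑ t, γ t • M k t) → f u A = γ i * M.det := by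
    intro u γ h
    rw [hf, colj, h, Matrix.det_updateCol_sum, smul_eq_mul]
  have fB : ∀ u γ : ι → ℝ, (u = fun k => ∑ t, γ t • M k t) → f u B = - (γ j * M.det) := by
    intro u γ h
    rw [← smul_eq_mul, ← Matrix.det_updateCol_sum, ← h, hf]
    have := Matrix.det_permute' (Equiv.swap i j) (M.updateCol j u)
    rw [Equiv.Perm.sign_swap hij] at this
    simp only [Units.val_neg, Units.val_one, Int.cast_neg, Int.cast_one, neg_mul, one_mul] at this
    rw [← this]
    congr 1
    ext p q
    simp only [Matrix.submatrix_apply, id]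
    by_cases hqi : q = i
    · subst hqi; rw [Equiv.swap_apply_left]; simp [Matrix.updateCol_apply, hij]
    · by_cases hqj : q = j
      · subst hqj; rw [Equiv.swap_apply_right]; simp [Matrix.updateCol_apply, hij, hB]
      · rw [Equiv.swap_apply_of_ne_of_ne hqi hqj]; simp [Matrix.updateCol_apply, hqi, hqj]
  have fBA : f B A = M.det := by
    rw [hf, colj, hB]
    congr 1
    exact Matrix.updateCol_eq_self M i
  have fdc : f d c = γ j * (δ i * M.det) - γ i * (δ j * M.det) := by
    have hc : c = (fun k => ∑ t, γ t • (M.updateCol i d) k t) + γ i • (B + (-1 : ℝ) • d) := by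
      funext k
      rw [hγ]
      simp only [Pi.add_apply, Pi.smul_apply, smul_eq_mul, hB]
      rw [← Finset.add_sum_erase _ _ (Finset.mem_univ i), ← Finset.add_sum_erase _ _ (Finset.mem_univ i)]
      have : ∑ t ∈ Finset.univ.erase i, γ t * M.updateCol i d k t = ∑ t ∈ Finset.univ.erase i, γ t * M k t := by
        refine Finset.sum_congr rfl fun t ht => ?_
        simp [Matrix.updateCol_apply, Finset.ne_of_mem_erase ht]
      rw [this]
      simp [Matrix.updateCol_apply]
      ring
    have e1 : f d B = - (δ j * M.det) := fB d δ hδ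
    have e2 : f d A = δ i * M.det := fA d δ hδ
    have e3 : f d d = 0 := by
      rw [hf]
      refine Matrix.det_zero_of_column_eq hij fun k => ?_
      simp [Matrix.updateCol_apply, hij]
    rw [hf, colj] at e2
    rw [hf] at e1 e3 ⊢
    rw [hc, Matrix.det_updateCol_add, Matrix.det_updateCol_sum, Matrix.det_updateCol_smul,
      Matrix.det_updateCol_add, Matrix.det_updateCol_smul, e1, e3, e2, smul_eq_mul]
    ring
  rw [fBA, fdc, fA c γ hγ, fA d δ hδ, fB c γ hγ, fB d δ hδ]
  ring

def Td (n : ℕ) (μ : ℕ → ℝ) (L : List ℕ) : ℝ := Lf μ (S n [0,0,0] * S n L)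

lemma lam0 : lam [0,0,0] = 0 := by
  funext r
  rcases r with _ | _ | _ | r <;> simp [lam]

lemma S0 (n : ℕ) : S n [0,0,0] = vdP n := by rw [vdP_eq, S, lam0]

lemma Td0 (n : ℕ) (μ : ℕ → ℝ) : Td n μ [0,0,0] = (n.factorial : ℝ) * (Hm n μ 0).det := by
  rw [← andreief, Td, S, lam0, Bd_of (by simp)]

lemma Ev_one (n : ℕ) (μ : ℕ → ℝ) : Ev n μ 1 = (n.factorial : ℝ) * (Hm n μ 0).det := by
  rw [← Td0, Td, S0, Ev, mul_one, pow_two]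

lemma plT (n : ℕ) (hn : 1 ≤ n) (μ : ℕ → ℝ) (h0 : (Hm n μ 0).det ≠ 0) :
    Td n μ [0,0,0] * Td n μ [2,2,0] - Td n μ [1,0,0] * Td n μ [2,1,0]
      + Td n μ [2,0,0] * Td n μ [1,1,0] = 0 := by
  obtain rfl | hn2 : n = 1 ∨ 2 ≤ n := by omega
  · have : ∀ x y, Td 1 μ [x, y+1, 0] = 0 := by
      intro x y
      rw [Td]
      nth_rewrite 2 [S]
      rw [Bd_not, mul_zero, map_zero]
      intro h
      have := h 1 le_rfl
      simp [lam] at this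
    rw [this 2 1, this 2 0, this 1 0]; ring
  · obtain ⟨m, rfl⟩ : ∃ m, n = m + 2 := ⟨n - 2, by omega⟩
    have hT : ∀ x y, Td (m+2) μ [x, y, 0] = ((m+2).factorial : ℝ) *
        (((Hm (m+2) μ 0).updateCol 0 (fun i => μ (m+1-i + (m+1+x)))).updateCol 1 (fun i => μ (m+1-i + (m+y)))).det := by
      intro x y
      have : ((Hm (m+2) μ 0).updateCol 0 (fun i => μ (m+1-i + (m+1+x)))).updateCol 1 (fun i => μ (m+1-i + (m+y))) = Hm (m+2) μ (lam [x,y,0]) := by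
        ext i j
        simp only [Hm, Matrix.updateCol_apply, Matrix.of_apply]
        refine Fin.cases ?_ (fun j => ?_) j
        · simp [lam]
        · refine Fin.cases ?_ (fun j => ?_) j
          · simp [lam]
          · have : (j.succ.succ : Fin (m+2)) ≠ 1 := by
              intro h; have := congrArg Fin.val h; simp at this
            rcases j with ⟨_ | j, hj⟩ <;> simp [lam, this]
      rw [this, ← andreief, Td, S, lam0, S, Bd_of (by simp), Bd_of]
      intro r hr
      rcases r with _ | _ | _ | r
      · omega
      · omega
      · simp [lam]
      · simp [lam]
    have := plucker (Hm (m+2) μ 0) 0 1 (by simp) h0 (fun i => μ (m+1-i + (m+1+1))) (fun i => μ (m+1-i + (m+1+2)))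
      _ (fun _ _ => rfl) (fun i => μ (m+1-i + (m+0))) (fun i => μ (m+1-i + (m+1+0))) (by
        funext i; simp [Hm]) (by
        funext i; simp [Hm])
    simp only [hT]
    have e1 : m + 1 + 0 = m + 1 := rfl
    have e2 : m + 1 + 1 = m + 2 := rfl
    simp only [e1, e2] at this ⊢
    linear_combination ((m+2).factorial : ℝ)^2 * this

lemma kp (n : ℕ) (hn : 1 ≤ n) (μ : ℕ → ℝ) (h0 : (Hm n μ 0).det ≠ 0) :
    Ev n μ 1 * (Ev n μ (pw n 1 ^ 4) + 3 * Ev n μ (pw n 2 ^ 2) - 4 * Ev n μ (pw n 1 * pw n 3))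
      - 4 * Ev n μ (pw n 1) * (Ev n μ (pw n 1 ^ 3) - Ev n μ (pw n 3))
      + 3 * (Ev n μ (pw n 1 ^ 2) + Ev n μ (pw n 2)) * (Ev n μ (pw n 1 ^ 2) - Ev n μ (pw n 2)) = 0 := by
  obtain ⟨h1, h2, h3, h4, h5⟩ := schur n
  have e : ∀ f, Ev n μ f = Lf μ (S n [0,0,0] * (f * S n [0,0,0])) := by
    intro f; rw [Ev, ← S0]; congr 1; ring
  have ofn : ∀ (c : ℝ) (f : MvPolynomial (Fin n) ℝ), Lf μ (S n [0,0,0] * (C c * f)) = c * Lf μ (S n [0,0,0] * f) := by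
    intro c f
    rw [mul_left_comm, ← smul_eq_C_mul, map_smul, smul_eq_mul]
  have c2 : (2 : MvPolynomial (Fin n) ℝ) = C 2 := (map_ofNat C 2).symm
  have c3 : (3 : MvPolynomial (Fin n) ℝ) = C 3 := (map_ofNat C 3).symm
  have c4 : (4 : MvPolynomial (Fin n) ℝ) = C 4 := (map_ofNat C 4).symm
  have c12 : (12 : MvPolynomial (Fin n) ℝ) = C 12 := (map_ofNat C 12).symm
  have ap : ∀ f g, f = g → Lf μ (S n [0,0,0] * f) = Lf μ (S n [0,0,0] * g) := fun f g h => by rw [h]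
  replace h1 := ap _ _ h1
  rw [c2] at h2 h3
  rw [c3] at h4
  rw [c3, c4, c12] at h5
  replace h2 := ap _ _ h2
  replace h3 := ap _ _ h3
  replace h4 := ap _ _ h4
  replace h5 := ap _ _ h5
  rw [ofn] at h2 h3 h4
  rw [ofn, mul_sub, mul_add, map_sub, map_add, ofn, ofn] at h5
  rw [mul_add, map_add] at h2
  rw [mul_sub, map_sub] at h3 h4
  simp only [← e, ← Td.eq_1] at h1 h2 h3 h4 h5
  have h0' : Ev n μ 1 = Td n μ [0,0,0] := by rw [e, one_mul]; rfl
  have := plT n hn μ h0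
  rw [← h0', ← h1] at this
  rw [h2, h3, h4, h5]
  linear_combination 12 * this

end P5


namespace P5
open MvPolynomial

lemma base_int (a b : ℝ) (ha : -1 < a) (hb : -1 < b) :
    IntegrableOn (fun x : ℝ => (1 - x) ^ b * x ^ a) (Set.Icc 0 1) := by
  rw [integrableOn_Icc_iff_integrableOn_Ioo]
  have h := Complex.betaIntegral_convergent (u := (a+1 : ℝ)) (v := (b+1 : ℝ))
    (by simp; linarith) (by simp; linarith)
  rw [intervalIntegrable_iff_integrableOn_Ioo_of_le zero_le_one] at h
  refine (IntegrableOn.congr_fun h.norm ?_ measurableSet_Ioo)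
  intro x hx
  have h1 : (1 - (x:ℂ)) = ((1 - x : ℝ) : ℂ) := by push_cast; rfl
  simp only [norm_mul]
  rw [h1, Complex.norm_cpow_eq_rpow_re_of_pos hx.1, Complex.norm_cpow_eq_rpow_re_of_pos (by linarith [hx.2])]
  simp [mul_comm]

lemma g_int (a b : ℝ) (ha : -1 < a) (hb : -1 < b) (g : ℝ → ℝ) (hg : Continuous g) :
    IntegrableOn (fun x : ℝ => g x * ((1 - x) ^ b * x ^ a)) (Set.Icc 0 1) :=
  IntegrableOn.continuousOn_mul hg.continuousOn (base_int a b ha hb) isCompact_Icc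

def mu (a b s : ℝ) (k : ℕ) : ℝ :=
  ∫ x in Set.Icc (0:ℝ) 1, (x ^ k * exp (-(s * x))) * ((1 - x) ^ b * x ^ a)

lemma mu_deriv (a b : ℝ) (ha : -1 < a) (hb : -1 < b) (k : ℕ) (s : ℝ) :
    HasDerivAt (fun t => mu a b t k) (- mu a b s (k+1)) s := by
  have hi := fun (t : ℝ) (k : ℕ) => g_int a b ha hb (fun x => x ^ k * exp (-(t * x))) (by fun_prop)
  have := (hasDerivAt_integral_of_dominated_loc_of_deriv_le
    (μ := volume.restrict (Set.Icc (0:ℝ) 1))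
    (F := fun t x => (x ^ k * exp (-(t * x))) * ((1 - x) ^ b * x ^ a))
    (F' := fun t x => -((x ^ (k+1) * exp (-(t * x))) * ((1 - x) ^ b * x ^ a)))
    (x₀ := s) (s := Metric.ball s 1) (bound := fun x => exp (|s| + 1) * ((1 - x) ^ b * x ^ a))
    (Metric.ball_mem_nhds s one_pos)
    (Eventually.of_forall fun t => (hi t k).aestronglyMeasurable)
    (hi s k) (hi s (k+1)).aestronglyMeasurable.neg ?_ (g_int a b ha hb _ continuous_const) ?_).2
  · rw [integral_neg] at this
    exact this
  · filter_upwards [ae_restrict_mem measurableSet_Icc] with x hx t ht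
    have hb0 : 0 ≤ (1 - x) ^ b * x ^ a :=
      mul_nonneg (rpow_nonneg (by linarith [hx.2]) _) (rpow_nonneg hx.1 _)
    rw [norm_neg, norm_mul, norm_of_nonneg hb0]
    refine mul_le_mul_of_nonneg_right ?_ hb0
    have h1 : 0 ≤ x ^ (k+1) := pow_nonneg hx.1 _
    have h2 : x ^ (k+1) ≤ 1 := pow_le_one₀ hx.1 hx.2
    rw [norm_of_nonneg (mul_nonneg h1 (exp_pos _).le)]
    have h3 : exp (-(t * x)) ≤ exp (|s| + 1) := by
      apply exp_le_exp.2
      rw [Metric.mem_ball, Real.dist_eq] at ht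
      have h4 : |t| ≤ |s| + 1 := by
        have := abs_sub_abs_le_abs_sub t s
        linarith
      have h5 : -(t * x) ≤ |t| * x := by
        nlinarith [neg_abs_le t, hx.1]
      have h6 : |t| * x ≤ |t| := mul_le_of_le_one_right (abs_nonneg _) hx.2
      linarith
    calc x ^ (k+1) * exp (-(t * x)) ≤ 1 * exp (|s| + 1) := by gcongr
      _ = _ := one_mul _
  · refine Eventually.of_forall fun x t _ => ?_
    have h1 : HasDerivAt (fun t : ℝ => -(t * x)) (-x) t := by
      simpa using ((hasDerivAt_id t).mul_const x).fun_neg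
    have := ((h1.exp.const_mul (x ^ k)).mul_const ((1 - x) ^ b * x ^ a))
    refine this.congr_deriv ?_
    ring

lemma mu_rec (a b s : ℝ) (ha : -1 < a) (hb : -1 < b) (m : ℕ) :
    (m + 1 + a) * mu a b s m - (m + 2 + a + b + s) * mu a b s (m+1) + s * mu a b s (m+2) = 0 := by
  have hi := fun (k : ℕ) => g_int a b ha hb (fun x => x ^ k * exp (-(s * x))) (by fun_prop)
  set f : ℝ → ℝ := fun x => x ^ (m + 1 + a) * (1 - x) ^ (b + 1) * exp (-(s * x)) with hf
  set f' : ℝ → ℝ := fun x => (m + 1 + a) * ((x ^ m * exp (-(s * x))) * ((1 - x) ^ b * x ^ a))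
    - (m + 2 + a + b + s) * ((x ^ (m+1) * exp (-(s * x))) * ((1 - x) ^ b * x ^ a))
    + s * ((x ^ (m+2) * exp (-(s * x))) * ((1 - x) ^ b * x ^ a)) with hf'
  have hm : (0:ℝ) ≤ m := Nat.cast_nonneg m
  have i0 := (hi m).const_mul (m + 1 + a)
  have i1 := (hi (m+1)).const_mul (m + 2 + a + b + s)
  have i2 := (hi (m+2)).const_mul s
  have hint : IntegrableOn f' (Set.Icc 0 1) := (i0.sub i1).add i2
  have key := intervalIntegral.integral_eq_sub_of_hasDerivAt_of_le (a := 0) (b := 1) (f := f) (f' := f')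
    zero_le_one ?_ ?_ ?_
  · have e1 : f 1 = 0 := by
      simp only [hf, sub_self]
      rw [zero_rpow (by linarith)]; ring
    have e0 : f 0 = 0 := by
      simp only [hf]
      rw [zero_rpow (by linarith)]; ring
    rw [e1, e0, intervalIntegral.integral_of_le zero_le_one, ← integral_Icc_eq_integral_Ioc] at key
    rw [mu, mu, mu, ← integral_const_mul, ← integral_const_mul, ← integral_const_mul,
      ← integral_sub i0 i1]
    have := integral_add (i0.sub i1) i2
    simp only [Pi.sub_apply] at this
    rw [← this]
    simpa using key
  · refine ContinuousOn.mul (ContinuousOn.mul ?_ ?_) (by fun_prop)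
    · exact (continuous_id.rpow_const (fun x => Or.inr (by linarith))).continuousOn
    · exact ((continuous_const.sub continuous_id).rpow_const (fun x => Or.inr (by linarith))).continuousOn
  · intro x hx
    have hx0 : x ≠ 0 := hx.1.ne'
    have hx1 : 1 - x ≠ 0 := by linarith [hx.2]
    have d1 : HasDerivAt (fun x : ℝ => x ^ (m + 1 + a)) ((m + 1 + a) * x ^ (m + 1 + a - 1)) x :=
      Real.hasDerivAt_rpow_const (Or.inl hx0)
    have d2 : HasDerivAt (fun x : ℝ => (1 - x) ^ (b + 1)) (-1 * (b + 1) * (1 - x) ^ (b + 1 - 1)) x :=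
      ((hasDerivAt_id x).const_sub 1).rpow_const (Or.inl hx1)
    have d3 : HasDerivAt (fun x : ℝ => exp (-(s * x))) (exp (-(s*x)) * (-s)) x := by
      have : HasDerivAt (fun x : ℝ => -(s * x)) (-s) x := by
        simpa using ((hasDerivAt_id x).const_mul s).fun_neg
      exact this.exp
    refine ((d1.fun_mul d2).fun_mul d3).congr_deriv ?_
    have r1 : x ^ ((m:ℝ) + 1 + a - 1) = x ^ m * x ^ a := by
      rw [show (m:ℝ) + 1 + a - 1 = a + m by ring, rpow_add_natCast hx0]; ring
    have r2 : x ^ ((m:ℝ) + 1 + a) = x ^ (m + 1) * x ^ a := by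
      rw [show (m:ℝ) + 1 + a = a + (m+1 : ℕ) by push_cast; ring, rpow_add_natCast hx0]; ring
    have r3 : (1 - x) ^ (b + 1 - 1) = (1 - x) ^ b := by ring_nf
    have r4 : (1 - x) ^ (b + 1) = (1 - x) ^ b * (1 - x) := rpow_add_one hx1 b
    rw [hf']
    beta_reduce
    rw [r1, r2, r3, r4]
    ring
  · rw [intervalIntegrable_iff_integrableOn_Icc_of_le zero_le_one]
    exact hint

lemma Lf_deriv (n : ℕ) (a b : ℝ) (ha : -1 < a) (hb : -1 < b) (s : ℝ) (f : MvPolynomial (Fin n) ℝ) :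
    HasDerivAt (fun t => Lf (mu a b t) f) (- Lf (mu a b s) (pw n 1 * f)) s := by
  induction f using MvPolynomial.induction_on' with
  | add p q hp hq =>
    simp only [mul_add, map_add]
    refine (hp.fun_add hq).congr_deriv ?_
    ring
  | monomial m c =>
    simp only [Lf_monomial]
    have h := (HasDerivAt.fun_finsetProd (u := Finset.univ) (x := s)
      (f := fun (i : Fin n) t => mu a b t (m i)) (f' := fun i => - mu a b s (m i + 1))
      (fun i _ => mu_deriv a b ha hb (m i) s)).const_mul c
    refine h.congr_deriv ?_
    rw [pw, Finset.sum_mul, map_sum, ← Finset.sum_neg_distrib, Finset.mul_sum]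
    refine Finset.sum_congr rfl fun i _ => ?_
    rw [Lf_X_pow_mul_monomial, smul_eq_mul]
    ring

lemma Ev_deriv (n : ℕ) (a b : ℝ) (ha : -1 < a) (hb : -1 < b) (s : ℝ) (k : ℕ) :
    HasDerivAt (fun t => Ev n (mu a b t) (pw n 1 ^ k)) (- Ev n (mu a b s) (pw n 1 ^ (k+1))) s := by
  refine (Lf_deriv n a b ha hb s (vdP n ^ 2 * pw n 1 ^ k)).congr_deriv ?_
  rw [Ev, show pw n 1 * (vdP n ^ 2 * pw n 1 ^ k) = vdP n ^ 2 * pw n 1 ^ (k+1) by ring]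

lemma Hm_det_ne (n : ℕ) (a b : ℝ) (ha : -1 < a) (hb : -1 < b) (s : ℝ) :
    (Hm n (mu a b s) 0).det ≠ 0 := by
  intro h0
  obtain ⟨v, hv, hv0⟩ := Matrix.exists_mulVec_eq_zero_iff.2 h0
  apply hv
  have hi := fun (k : ℕ) => g_int a b ha hb (fun x => x ^ k * exp (-(s * x))) (by fun_prop)
  set q : Polynomial ℝ := ∑ i : Fin n, Polynomial.C (v i) * Polynomial.X ^ (n - 1 - (i:ℕ)) with hq
  have hqe : ∀ x, q.eval x = ∑ i : Fin n, v i * x ^ (n - 1 - (i:ℕ)) := by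
    intro x; simp [hq, Polynomial.eval_finsetSum]
  have hint : IntegrableOn (fun x => ((q.eval x)^2 * exp (-(s * x))) * ((1 - x) ^ b * x ^ a)) (Set.Icc 0 1) :=
    g_int a b ha hb (fun x => (q.eval x)^2 * exp (-(s * x))) (by fun_prop)
  have hz : ∫ x in Set.Icc (0:ℝ) 1, ((q.eval x)^2 * exp (-(s * x))) * ((1 - x) ^ b * x ^ a) = 0 := by
    have e : ∀ x, ((q.eval x)^2 * exp (-(s * x))) * ((1 - x) ^ b * x ^ a)
      = ∑ i : Fin n, ∑ j : Fin n, v i * v j * ((x ^ (n - 1 - (i:ℕ) + (n - 1 - (j:ℕ))) * exp (-(s * x))) * ((1 - x) ^ b * x ^ a)) := by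
      intro x
      rw [hqe, pow_two, Finset.sum_mul_sum, Finset.sum_mul, Finset.sum_mul]
      refine Finset.sum_congr rfl fun i _ => ?_
      rw [Finset.sum_mul, Finset.sum_mul]
      refine Finset.sum_congr rfl fun j _ => ?_
      rw [pow_add]; ring
    simp only [e]
    rw [integral_finsetSum _ (fun i _ => integrable_finsetSum _ fun j _ => (hi _).const_mul _)]
    refine Finset.sum_eq_zero fun i _ => ?_
    rw [integral_finsetSum _ (fun j _ => (hi _).const_mul _)]
    have := congrFun hv0 i
    simp only [Matrix.mulVec, dotProduct, Hm, Matrix.of_apply, Pi.zero_apply, add_zero] at this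
    have this' : v i * ∑ x : Fin n, mu a b s (n - 1 - (i:ℕ) + (n - 1 - (x:ℕ))) * v x = 0 := by rw [this, mul_zero]
    refine Eq.trans ?_ this'
    rw [Finset.mul_sum]
    refine Finset.sum_congr rfl fun j _ => ?_
    rw [integral_const_mul, mu]; ring
  rw [setIntegral_eq_zero_iff_of_nonneg_ae _ hint] at hz
  · have hz' := ae_restrict_of_ae_restrict_of_subset (Set.Ioo_subset_Icc_self (a := (0:ℝ)) (b := 1)) hz
    have : (fun x => q.eval x) =ᵐ[volume.restrict (Set.Ioo (0:ℝ) 1)] (fun _ => 0) := by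
      filter_upwards [hz', ae_restrict_mem measurableSet_Ioo] with x hx hx'
      have h1 : 0 < (1 - x) ^ b * x ^ a :=
        mul_pos (rpow_pos_of_pos (by linarith [hx'.2]) _) (rpow_pos_of_pos hx'.1 _)
      have h2 := exp_pos (-(s * x))
      simpa [h1.ne', h2.ne'] using hx
    have := Measure.eqOn_open_of_ae_eq this isOpen_Ioo q.continuous.continuousOn continuousOn_const
    have hq0 : q = 0 := by
      apply Polynomial.eq_zero_of_infinite_isRoot
      exact (Set.Ioo_infinite (zero_lt_one (α := ℝ))).mono fun x hx => this hx
    funext i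
    have hc := congrArg (fun p => Polynomial.coeff p (n - 1 - (i:ℕ))) hq0
    simp only [hq, Polynomial.finset_sum_coeff, Polynomial.coeff_C_mul, Polynomial.coeff_X_pow, Polynomial.coeff_zero] at hc
    rw [Finset.sum_eq_single i] at hc
    · simpa using hc
    · intro j _ hj
      have : n - 1 - (i:ℕ) ≠ n - 1 - (j:ℕ) := by
        intro h; apply hj; ext; omega
      simp [this]
    · simp
  · filter_upwards [ae_restrict_mem measurableSet_Icc] with x hx
    exact mul_nonneg (mul_nonneg (sq_nonneg _) (exp_pos _).le)
      (mul_nonneg (rpow_nonneg (by linarith [hx.2]) _) (rpow_nonneg hx.1 _))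

/-! scaling -/

def nu (a b s : ℝ) (k : ℕ) : ℝ :=
  ∫ z in Set.Icc (0:ℝ) s, z ^ k * ((s - z) ^ b * z ^ a * exp (-z))

lemma nu_aux (a b s : ℝ) (hs : 0 < s) (k : ℕ) (x : ℝ) (hx : x ∈ Set.Icc (0:ℝ) 1) :
    (s * x) ^ k * ((s - s * x) ^ b * (s * x) ^ a * exp (-(s * x)))
      = s ^ k * (s ^ a * s ^ b) * ((x ^ k * exp (-(s * x))) * ((1 - x) ^ b * x ^ a)) := by
  rw [show s - s * x = s * (1 - x) by ring, mul_rpow hs.le (by linarith [hx.2]), mul_rpow hs.le hx.1, mul_pow]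
  ring

lemma nu_int (a b s : ℝ) (ha : -1 < a) (hb : -1 < b) (hs : 0 < s) (k : ℕ) :
    IntegrableOn (fun z : ℝ => z ^ k * ((s - z) ^ b * z ^ a * exp (-z))) (Set.Icc 0 s) := by
  rw [← intervalIntegrable_iff_integrableOn_Icc_of_le hs.le, ← IntervalIntegrable.comp_mul_left_iff hs.ne',
    zero_div, div_self hs.ne', intervalIntegrable_iff_integrableOn_Icc_of_le zero_le_one]
  have := (g_int a b ha hb (fun x => x ^ k * exp (-(s * x))) (by fun_prop)).const_mul (s ^ k * (s ^ a * s ^ b))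
  refine IntegrableOn.congr_fun this ?_ measurableSet_Icc
  intro x hx
  exact (nu_aux a b s hs k x hx).symm

lemma nu_eq (a b s : ℝ) (hs : 0 < s) (k : ℕ) :
    nu a b s k = s ^ k * (s * s ^ a * s ^ b) * mu a b s k := by
  have := intervalIntegral.mul_integral_comp_mul_left (a := 0) (b := 1)
    (f := fun z : ℝ => z ^ k * ((s - z) ^ b * z ^ a * exp (-z))) s
  rw [mul_zero, mul_one, intervalIntegral.integral_of_le hs.le, intervalIntegral.integral_of_le zero_le_one,
    ← integral_Icc_eq_integral_Ioc, ← integral_Icc_eq_integral_Ioc] at this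
  rw [nu, ← this, setIntegral_congr_fun measurableSet_Icc (fun x hx => nu_aux a b s hs k x hx),
    integral_const_mul, mu]
  ring

lemma int_Lf (n : ℕ) (a b s : ℝ) (ha : -1 < a) (hb : -1 < b) (hs : 0 < s) (f : MvPolynomial (Fin n) ℝ) :
    IntegrableOn (fun z : Fin n → ℝ => eval z f * ∏ i, ((s - z i) ^ b * z i ^ a * exp (-z i)))
      (Set.univ.pi fun _ : Fin n => Set.Icc 0 s) ∧
    ∫ z in Set.univ.pi fun _ : Fin n => Set.Icc 0 s,
      eval z f * ∏ i, ((s - z i) ^ b * z i ^ a * exp (-z i)) = Lf (nu a b s) f := by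
  induction f using MvPolynomial.induction_on' with
  | add p q hp hq =>
    simp only [map_add, add_mul]
    refine ⟨hp.1.add hq.1, ?_⟩
    rw [integral_add hp.1 hq.1, hp.2, hq.2]
  | monomial m c =>
    have e : ∀ z : Fin n → ℝ, eval z (monomial m c) * ∏ i, ((s - z i) ^ b * z i ^ a * exp (-z i))
        = c * ∏ i, (z i ^ (m i) * ((s - z i) ^ b * z i ^ a * exp (-z i))) := by
      intro z
      rw [eval_monomial, Finsupp.prod_fintype _ _ (by simp), mul_assoc, ← Finset.prod_mul_distrib]
    simp only [e]
    rw [IntegrableOn, volume_pi, Measure.restrict_pi_pi]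
    refine ⟨Integrable.const_mul (Integrable.fintype_prod
      (f := fun i z => z ^ (m i) * ((s - z) ^ b * z ^ a * exp (-z)))
      fun i => nu_int a b s ha hb hs (m i)) c, ?_⟩
    rw [integral_const_mul, integral_fintype_prod_eq_prod
      (f := fun i z => z ^ (m i) * ((s - z) ^ b * z ^ a * exp (-z))), Lf_monomial]
    rfl

lemma Hm_nu (n : ℕ) (a b s : ℝ) (hs : 0 < s) :
    (Hm n (nu a b s) 0).det = s ^ ((n:ℝ)^2 + n * (a + b)) * (Hm n (mu a b s) 0).det := by
  have e : Hm n (nu a b s) 0 = Matrix.of fun i j : Fin n => (s ^ (n - 1 - (i:ℕ)) * (s * s ^ a * s ^ b)) *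
      (Matrix.of fun i j : Fin n => s ^ (n - 1 - (j:ℕ)) * (Hm n (mu a b s) 0) i j) i j := by
    ext i j
    simp only [Hm, Matrix.of_apply, nu_eq a b s hs, Pi.zero_apply, add_zero, pow_add]
    ring
  rw [e, Matrix.det_mul_column, Matrix.det_mul_row, ← mul_assoc]
  congr 1
  rw [Finset.prod_mul_distrib, Finset.prod_pow_eq_pow_sum, Finset.prod_const, Finset.card_univ, Fintype.card_fin]
  have hsum : ∑ i : Fin n, (n - 1 - (i:ℕ)) = ∑ i ∈ Finset.range n, i := by
    rw [Fin.sum_univ_eq_sum_range (fun i => n - 1 - i), Finset.sum_range_reflect (fun i => i)]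
  rw [hsum]
  have h2 : ((∑ i ∈ Finset.range n, i : ℕ) : ℝ) * 2 = n * (n - 1) := by
    have := Finset.sum_range_id_mul_two n
    rw [← Nat.cast_two, ← Nat.cast_mul, this]
    rcases n with _ | n <;> simp
  have h3 : s * s ^ a * s ^ b = s ^ (1 + a + b) := by
    rw [rpow_add hs, rpow_add hs, rpow_one]
  rw [h3, ← rpow_natCast s, ← rpow_natCast (s ^ (1 + a + b)), ← rpow_mul hs.le, ← rpow_add hs, ← rpow_add hs]
  congr 1
  linear_combination h2

end P5


namespace P5
open MvPolynomial

lemma matInt_eq (n : ℕ) (a b s : ℝ) (ha : -1 < a) (hb : -1 < b) (hs : 0 < s) :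
    matInt5 n a b s = s ^ ((n:ℝ)^2 + n*(a+b)) * Ev n (mu a b s) 1 := by
  have h := (int_Lf n a b s ha hb hs (vdP n ^ 2)).2
  have h1 : ∀ z : Fin n → ℝ, eval z (vdP n ^ 2) = vdm z ^ 2 := by
    intro z; simp [vdP, vdm, map_prod]
  simp only [h1] at h
  have h2 : Lf (nu a b s) (vdP n ^ 2) = Ev n (nu a b s) 1 := by simp [Ev]
  rw [matInt5, h, h2, Ev_one, Ev_one, Hm_nu n a b s hs]; ring

lemma Ev_ne (n : ℕ) (a b s : ℝ) (ha : -1 < a) (hb : -1 < b) : Ev n (mu a b s) 1 ≠ 0 := by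
  rw [Ev_one]
  exact mul_ne_zero (by exact_mod_cast n.factorial_ne_zero) (Hm_det_ne n a b ha hb s)

def Rr (n : ℕ) (a b : ℝ) (i : ℕ) (s : ℝ) : ℝ :=
  Ev n (mu a b s) (pw n 1 ^ i) / Ev n (mu a b s) 1

lemma Rr_deriv (n : ℕ) (a b s : ℝ) (ha : -1 < a) (hb : -1 < b) (i : ℕ) :
    HasDerivAt (Rr n a b i) (-Rr n a b (i+1) s + Rr n a b i s * Rr n a b 1 s) s := by
  have h0 := Ev_ne n a b s ha hb
  have h1 := Ev_deriv n a b ha hb s i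
  have h2 := Ev_deriv n a b ha hb s 0
  simp only [pow_zero, zero_add] at h2
  refine (h1.fun_div h2 h0).congr_deriv ?_
  simp only [Rr]
  field_simp
  ring

lemma klog_eq (n : ℕ) (a b s : ℝ) (ha : -1 < a) (hb : -1 < b) (hs : 0 < s) :
    klog5 n a b s = ((n:ℝ)^2 + n*(a+b)) - s * Rr n a b 1 s := by
  have h0 := Ev_ne n a b s ha hb
  have h2 := Ev_deriv n a b ha hb s 0
  simp only [pow_zero, zero_add] at h2
  have h3 := (Real.hasDerivAt_rpow_const (x := s) (p := (n:ℝ)^2 + n*(a+b)) (Or.inl hs.ne'))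
  have hp : s ^ ((n:ℝ)^2 + n*(a+b)) ≠ 0 := (Real.rpow_pos_of_pos hs _).ne'
  have h4 := (h3.fun_mul h2).log (mul_ne_zero hp h0)
  have h5 : (fun t => Real.log (matInt5 n a b t)) =ᶠ[𝓝 s]
      fun t => Real.log (t ^ ((n:ℝ)^2 + n*(a+b)) * Ev n (mu a b t) 1) := by
    filter_upwards [lt_mem_nhds hs] with t ht
    rw [matInt_eq n a b t ha hb ht]
  rw [klog5, h5.deriv_eq, h4.deriv, Real.rpow_sub hs, Real.rpow_one, Rr]
  field_simp
  ring

lemma klog_derivs (n : ℕ) (a b s : ℝ) (ha : -1 < a) (hb : -1 < b) (hs : 0 < s) :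
    deriv (klog5 n a b) s = -Rr n a b 1 s + s * (Rr n a b 2 s - Rr n a b 1 s ^ 2) ∧
    iteratedDeriv 2 (klog5 n a b) s = 2 * (Rr n a b 2 s - Rr n a b 1 s ^ 2)
      - s * (Rr n a b 3 s - 3 * Rr n a b 1 s * Rr n a b 2 s + 2 * Rr n a b 1 s ^ 3) ∧
    iteratedDeriv 3 (klog5 n a b) s =
      - 3 * (Rr n a b 3 s - 3 * Rr n a b 1 s * Rr n a b 2 s + 2 * Rr n a b 1 s ^ 3)
      + s * (Rr n a b 4 s - 4 * Rr n a b 3 s * Rr n a b 1 s - 3 * Rr n a b 2 s ^ 2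
        + 12 * Rr n a b 2 s * Rr n a b 1 s ^ 2 - 6 * Rr n a b 1 s ^ 4) := by
  have e1 : ∀ t : ℝ, 0 < t → deriv (klog5 n a b) t
      = -Rr n a b 1 t + t * (Rr n a b 2 t - Rr n a b 1 t ^ 2) := by
    intro t ht
    have h : klog5 n a b =ᶠ[𝓝 t] fun t => ((n:ℝ)^2 + n*(a+b)) - t * Rr n a b 1 t := by
      filter_upwards [lt_mem_nhds ht] with x hx using klog_eq n a b x ha hb hx
    rw [h.deriv_eq]
    have := ((hasDerivAt_id' t).fun_mul (Rr_deriv n a b t ha hb 1)).const_sub ((n:ℝ)^2 + n*(a+b))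
    rw [this.deriv]; ring
  have e2 : ∀ t : ℝ, 0 < t → iteratedDeriv 2 (klog5 n a b) t
      = 2 * (Rr n a b 2 t - Rr n a b 1 t ^ 2)
      - t * (Rr n a b 3 t - 3 * Rr n a b 1 t * Rr n a b 2 t + 2 * Rr n a b 1 t ^ 3) := by
    intro t ht
    have h : iteratedDeriv 1 (klog5 n a b) =ᶠ[𝓝 t]
        fun t => -Rr n a b 1 t + t * (Rr n a b 2 t - Rr n a b 1 t ^ 2) := by
      filter_upwards [lt_mem_nhds ht] with x hx
      rw [iteratedDeriv_one, e1 x hx]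
    rw [iteratedDeriv_succ, h.deriv_eq]
    have d1 := Rr_deriv n a b t ha hb 1
    have d2 := Rr_deriv n a b t ha hb 2
    have := d1.fun_neg.fun_add ((hasDerivAt_id' t).fun_mul (d2.fun_sub (d1.fun_pow 2)))
    rw [this.deriv]; norm_num; ring
  refine ⟨e1 s hs, e2 s hs, ?_⟩
  have h : iteratedDeriv 2 (klog5 n a b) =ᶠ[𝓝 s] fun t => 2 * (Rr n a b 2 t - Rr n a b 1 t ^ 2)
      - t * (Rr n a b 3 t - 3 * Rr n a b 1 t * Rr n a b 2 t + 2 * Rr n a b 1 t ^ 3) := by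
    filter_upwards [lt_mem_nhds hs] with x hx using e2 x hx
  rw [iteratedDeriv_succ, h.deriv_eq]
  have d1 := Rr_deriv n a b s ha hb 1
  have d2 := Rr_deriv n a b s ha hb 2
  have d3 := Rr_deriv n a b s ha hb 3
  have := ((d2.fun_sub (d1.fun_pow 2)).const_mul 2).fun_sub ((hasDerivAt_id' s).fun_mul
    ((d3.fun_sub ((d1.const_mul 3).fun_mul d2)).fun_add ((d1.fun_pow 3).const_mul 2)))
  rw [this.deriv]; norm_num; ring

lemma final_alg (n a b s e1 e2 e3 e4 p2 p3 p12 p13 p22 : ℝ) (hs : s ≠ 0)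
    (v1 : s * p2 = (2*n+a+b+s)*e1 - n*(n+a))
    (v2 : s * p12 = (2*n+a+b+s)*e2 - n*(n+a)*e1 - (e1 - p2))
    (v3 : s * p22 = (2*n+a+b+s)*p12 - n*(n+a)*p2 - 2*(p2-p3))
    (v4 : s * p3 = -(2*n+a)*e1 + (2*n+a+b+s)*p2 + e2)
    (v5 : s * p13 = -(2*n+a)*e2 + (2*n+a+b+s)*p12 + e3 - (p2 - p3))
    (k : (e4 + 3*p22 - 4*p13) - 4*e1*(e3-p3) + 3*(e2+p2)*(e2-p2) = 0) :
    (-3 * (e3 - 3*e1*e2 + 2*e1^3) + s*(e4 - 4*e3*e1 - 3*e2^2 + 12*e2*e1^2 - 6*e1^4))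
    + (2*(e2 - e1^2) - s*(e3 - 3*e1*e2 + 2*e1^3)) / s
    + (6/s) * (-e1 + s*(e2-e1^2))^2
    - (4/s^2) * (n^2+n*(a+b) - s*e1) * (-e1 + s*(e2-e1^2))
    - (s^2 - 2*s*(2*n+a-b) + (a+b)^2) * (-e1 + s*(e2-e1^2)) / s^2
    + (s - 2*n - a + b) * (n^2+n*(a+b) - s*e1) / s^2
    - (b*n/s^2)*(s+a+b) = 0 := by
  obtain rfl : p2 = ((2*n+a+b+s)*e1 - n*(n+a))/s := by rw [eq_div_iff hs]; linarith
  obtain rfl := eq_div_of_mul_eq hs ((mul_comm p12 s).trans v2)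
  obtain rfl := eq_div_of_mul_eq hs ((mul_comm p3 s).trans v4)
  obtain rfl := eq_div_of_mul_eq hs ((mul_comm p13 s).trans v5)
  obtain rfl := eq_div_of_mul_eq hs ((mul_comm p22 s).trans v3)
  field_simp at k ⊢
  linear_combination k
end P5

/-- `k(s)` satisfies the Painlevé V type equation
`k‴ + k″/s + (6/s)k′² − (4/s²)kk′ − (s² − 2s(2n+a−b) + (a+b)²)k′/s²
  + (s − 2n − a + b)k/s² − (bn/s²)(s + a + b) = 0` for `s > 0`. -/
theorem statement6 (n : ℕ) (hn : 1 ≤ n) (a b : ℝ) (ha : -1 < a) (hb : -1 < b) :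
    ∀ s : ℝ, 0 < s →
      iteratedDeriv 3 (klog5 n a b) s + iteratedDeriv 2 (klog5 n a b) s / s +
        (6 / s) * (deriv (klog5 n a b) s) ^ 2 -
        (4 / s ^ 2) * klog5 n a b s * deriv (klog5 n a b) s -
        (s ^ 2 - 2 * s * (2 * n + a - b) + (a + b) ^ 2) *
          deriv (klog5 n a b) s / s ^ 2 +
        (s - 2 * n - a + b) * klog5 n a b s / s ^ 2 -
        (b * n / s ^ 2) * (s + a + b) = 0 := by
  intro s hs
  obtain ⟨k1, k2, k3⟩ := P5.klog_derivs n a b s ha hb hs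
  rw [k1, k2, k3, P5.klog_eq n a b s ha hb hs]
  have h0 := P5.Ev_ne n a b s ha hb
  obtain ⟨v1, v2, v3, v4, v5⟩ := P5.virs (n := n) (P5.mu a b s) a b s (P5.mu_rec a b s ha hb)
  have k := P5.kp n hn (P5.mu a b s) (P5.Hm_det_ne n a b ha hb s)
  refine P5.final_alg n a b s _ _ _ _ (P5.Ev n (P5.mu a b s) (P5.pw n 2) / P5.Ev n (P5.mu a b s) 1)
    (P5.Ev n (P5.mu a b s) (P5.pw n 3) / P5.Ev n (P5.mu a b s) 1)
    (P5.Ev n (P5.mu a b s) (P5.pw n 1 * P5.pw n 2) / P5.Ev n (P5.mu a b s) 1)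
    (P5.Ev n (P5.mu a b s) (P5.pw n 1 * P5.pw n 3) / P5.Ev n (P5.mu a b s) 1)
    (P5.Ev n (P5.mu a b s) (P5.pw n 2 ^ 2) / P5.Ev n (P5.mu a b s) 1) hs.ne' ?_ ?_ ?_ ?_ ?_ ?_ <;>
    try simp only [P5.Rr, pow_one]
  all_goals field_simp
  · linear_combination v1
  · linear_combination v2
  · linear_combination v3
  · linear_combination v4
  · linear_combination v5
  · linear_combination k

end
end

section
/- Let I ⊂ ℝ be a finite union of compact intervals, ρ : I → [0,∞) a continuous function that is not almost everywhere zero, and n ≥ 1 an integer. Define τ(t₁,t₂,t₃) := ∫_{I^n} Δ_n(z)² ∏_{k=1}^n e^{t₁ z_k + t₂ z_k² + t₃ z_k³} ρ(z_k) dz_k. Then τ > 0 everywhere, and log τ satisfies the first KP equation: (∂⁴/∂t₁⁴) log τ + 3 (∂²/∂t₂²) log τ − 4 (∂²/∂t₁∂t₃) log τ + 6 ( (∂²/∂t₁²) log τ )² = 0 at every point (t₁,t₂,t₃) ∈ ℝ³. -/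
open MeasureTheory Filter Real
open scoped BigOperators Topology

noncomputable section

/-- `τ(t₁,t₂,t₃) = ∫_{I^n} Δ_n(z)² ∏ e^{t₁z_k + t₂z_k² + t₃z_k³} ρ(z_k) dz`. -/
def tau9 (I : Set ℝ) (ρ : ℝ → ℝ) (n : ℕ) (t₁ t₂ t₃ : ℝ) : ℝ :=
  ∫ z in Set.univ.pi fun _ : Fin n => I,
    vdm z ^ 2 *
      ∏ k, (Real.exp (t₁ * z k + t₂ * z k ^ 2 + t₃ * z k ^ 3) * ρ (z k))


def KPdata (f : ℝ → ℝ → ℝ → ℝ) : Prop :=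
  ∃ f1 f11 f111 f1111 f2 f22 f3 f13 : ℝ → ℝ → ℝ → ℝ,
    (∀ x y z, HasDerivAt (fun s => f s y z) (f1 x y z) x) ∧
    (∀ x y z, HasDerivAt (fun s => f1 s y z) (f11 x y z) x) ∧
    (∀ x y z, HasDerivAt (fun s => f11 s y z) (f111 x y z) x) ∧
    (∀ x y z, HasDerivAt (fun s => f111 s y z) (f1111 x y z) x) ∧
    (∀ x y z, HasDerivAt (fun s => f x s z) (f2 x y z) y) ∧
    (∀ x y z, HasDerivAt (fun s => f2 x s z) (f22 x y z) y) ∧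
    (∀ x y z, HasDerivAt (fun s => f x y s) (f3 x y z) z) ∧
    (∀ x y z, HasDerivAt (fun s => f3 s y z) (f13 x y z) x) ∧
    (∀ x y z, f x y z * f1111 x y z - 4 * f1 x y z * f111 x y z + 3 * f11 x y z ^ 2
      + 3 * (f x y z * f22 x y z - f2 x y z ^ 2)
      - 4 * (f x y z * f13 x y z - f1 x y z * f3 x y z) = 0)

lemma KPdata.const_mul {f : ℝ → ℝ → ℝ → ℝ} (h : KPdata f) (c : ℝ) :
    KPdata (fun x y z => c * f x y z) := by
  obtain ⟨f1, f11, f111, f1111, f2, f22, f3, f13, h1, h2, h3, h4, h5, h6, h7, h8, h9⟩ := h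
  refine ⟨fun x y z => c * f1 x y z, fun x y z => c * f11 x y z, fun x y z => c * f111 x y z,
    fun x y z => c * f1111 x y z, fun x y z => c * f2 x y z, fun x y z => c * f22 x y z,
    fun x y z => c * f3 x y z, fun x y z => c * f13 x y z,
    fun x y z => (h1 x y z).const_mul c, fun x y z => (h2 x y z).const_mul c,
    fun x y z => (h3 x y z).const_mul c, fun x y z => (h4 x y z).const_mul c,
    fun x y z => (h5 x y z).const_mul c, fun x y z => (h6 x y z).const_mul c,
    fun x y z => (h7 x y z).const_mul c, fun x y z => (h8 x y z).const_mul c, ?_⟩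
  intro x y z
  linear_combination c ^ 2 * h9 x y z

lemma iter2_log {f f1 f2 : ℝ → ℝ} (hp : ∀ x, 0 < f x) (h1 : ∀ x, HasDerivAt f (f1 x) x)
    (h2 : ∀ x, HasDerivAt f1 (f2 x) x) :
    iteratedDeriv 2 (fun s => Real.log (f s)) =
      fun x => (f2 x * f x - f1 x * f1 x) / f x ^ 2 := by
  have e1 : iteratedDeriv 1 (fun s => Real.log (f s)) = fun x => f1 x / f x := by
    rw [iteratedDeriv_one]; ext x; exact ((h1 x).log (hp x).ne').deriv
  rw [iteratedDeriv_succ, e1]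
  ext x
  exact ((h2 x).div (h1 x) (hp x).ne').deriv

lemma iter4_log {f f1 f2 f3 f4 : ℝ → ℝ} (hp : ∀ x, 0 < f x) (h1 : ∀ x, HasDerivAt f (f1 x) x)
    (h2 : ∀ x, HasDerivAt f1 (f2 x) x) (h3 : ∀ x, HasDerivAt f2 (f3 x) x)
    (h4 : ∀ x, HasDerivAt f3 (f4 x) x) (x : ℝ) :
    iteratedDeriv 4 (fun s => Real.log (f s)) x =
      f4 x / f x - 4 * f1 x * f3 x / f x ^ 2 - 3 * f2 x ^ 2 / f x ^ 2
       + 12 * f1 x ^ 2 * f2 x / f x ^ 3 - 6 * f1 x ^ 4 / f x ^ 4 := by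
  have e3 : iteratedDeriv 3 (fun s => Real.log (f s)) =
      fun x => f3 x / f x - 3 * f1 x * f2 x / f x ^ 2 + 2 * f1 x ^ 3 / f x ^ 3 := by
    rw [iteratedDeriv_succ, iter2_log hp h1 h2]
    ext x
    have hx := (hp x).ne'
    have := (((h3 x).fun_mul (h1 x)).fun_sub ((h2 x).fun_mul (h2 x))).fun_div ((h1 x).fun_pow 2)
      (pow_ne_zero 2 hx)
    rw [this.deriv]
    field_simp
    push_cast
    ring
  rw [iteratedDeriv_succ, e3]
  have hx := (hp x).ne'
  have := (((h4 x).fun_div (h1 x) hx).fun_sub ((((h2 x).const_mul 3).fun_mul (h3 x)).fun_div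
    ((h1 x).fun_pow 2) (pow_ne_zero 2 hx))).fun_add ((((h2 x).fun_pow 3).const_mul 2).fun_div
    ((h1 x).fun_pow 3) (pow_ne_zero 3 hx))
  rw [this.deriv]
  field_simp
  push_cast
  ring

lemma KPdata.kp {f : ℝ → ℝ → ℝ → ℝ} (h : KPdata f) (hp : ∀ x y z, 0 < f x y z) (t₁ t₂ t₃ : ℝ) :
    iteratedDeriv 4 (fun s => Real.log (f s t₂ t₃)) t₁ +
        3 * iteratedDeriv 2 (fun s => Real.log (f t₁ s t₃)) t₂ -
        4 * deriv (fun s₁ => deriv (fun s₃ => Real.log (f s₁ t₂ s₃)) t₃) t₁ +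
        6 * (iteratedDeriv 2 (fun s => Real.log (f s t₂ t₃)) t₁) ^ 2 = 0 := by
  obtain ⟨f1, f11, f111, f1111, f2, f22, f3, f13, h1, h2, h3, h4, h5, h6, h7, h8, h9⟩ := h
  have a1 := iter4_log (f := fun s => f s t₂ t₃) (fun x => hp _ _ _) (fun x => h1 x t₂ t₃)
    (fun x => h2 x t₂ t₃) (fun x => h3 x t₂ t₃) (fun x => h4 x t₂ t₃) t₁
  have a2 := congrFun (iter2_log (f := fun s => f s t₂ t₃) (fun x => hp _ _ _) (fun x => h1 x t₂ t₃)
    (fun x => h2 x t₂ t₃)) t₁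
  have a3 := congrFun (iter2_log (f := fun s => f t₁ s t₃) (fun x => hp _ _ _)
    (fun x => h5 t₁ x t₃) (fun x => h6 t₁ x t₃)) t₂
  have a4 : (fun s₁ => deriv (fun s₃ => Real.log (f s₁ t₂ s₃)) t₃) =
      fun s₁ => f3 s₁ t₂ t₃ / f s₁ t₂ t₃ := by
    ext s; exact ((h7 s t₂ t₃).log (hp _ _ _).ne').deriv
  have hx := (hp t₁ t₂ t₃).ne'
  rw [a1, a2, a3, a4, ((h8 t₁ t₂ t₃).fun_div (h1 t₁ t₂ t₃) hx).deriv]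
  have := h9 t₁ t₂ t₃
  field_simp
  linear_combination (f t₁ t₂ t₃)^2 * this

def Wd {n : ℕ} (M : ℕ → ℝ) (a : Fin n → ℕ) : ℝ :=
  Matrix.det (Matrix.of fun i j : Fin n => M (i + a j))

lemma Wd_deriv {n : ℕ} (M : ℕ → ℝ → ℝ) (k : ℕ) (s : ℝ)
    (h : ∀ a, HasDerivAt (M a) (M (a + k) s) s) (a : Fin n → ℕ) :
    HasDerivAt (fun x => Wd (fun b => M b x) a)
      (∑ j, Wd (fun b => M b s) (Function.update a j (a j + k))) s := by
  unfold Wd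
  simp only [Matrix.det_apply', Matrix.of_apply]
  have : ∀ σ : Equiv.Perm (Fin n), HasDerivAt
      (fun x => ((Equiv.Perm.sign σ : ℤ) : ℝ) * ∏ i, M (σ i + a i) x)
      (((Equiv.Perm.sign σ : ℤ) : ℝ) * ∑ j, ∏ i, M (σ i + Function.update a j (a j + k) i) s) s := by
    intro σ
    refine HasDerivAt.const_mul _ ?_
    have := HasDerivAt.fun_finsetProd (u := Finset.univ) (f := fun i x => M (σ i + a i) x)
      (f' := fun i => M (σ i + a i + k) s) (x := s) (fun i _ => h _)
    refine this.congr_deriv ?_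
    refine Finset.sum_congr rfl fun j _ => ?_
    rw [← Finset.prod_erase_mul _ _ (Finset.mem_univ j), smul_eq_mul]
    congr 1
    · refine Finset.prod_congr rfl fun i hi => ?_
      rw [Function.update_of_ne (Finset.ne_of_mem_erase hi)]
    · simp [add_assoc]
  refine (HasDerivAt.fun_sum fun σ _ => this σ).congr_deriv ?_
  rw [Finset.sum_comm]
  simp only [Finset.mul_sum]

lemma Wd_zero {n : ℕ} (M : ℕ → ℝ) (a : Fin n → ℕ) {i j : Fin n} (hij : i ≠ j) (h : a i = a j) :
    Wd M a = 0 := by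
  refine Matrix.det_zero_of_column_eq hij fun k => ?_
  simp [h]

lemma Wd_swap {n : ℕ} (M : ℕ → ℝ) (a b : Fin n → ℕ) {i j : Fin n} (hij : i ≠ j)
    (h : b = a ∘ Equiv.swap i j) :
    Wd M b = - Wd M a := by
  have := Matrix.det_permute' (Equiv.swap i j) (Matrix.of fun i j : Fin n => M (i + a j))
  rw [Equiv.Perm.sign_swap hij] at this
  subst h
  exact this.trans (by simp [Wd])

lemma plucker {n : ℕ} (A : Matrix (Fin n) (Fin n) ℝ) {p q : Fin n} (hpq : p ≠ q)
    (z w : Fin n → ℝ) :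
    A.det * ((A.updateCol p z).updateCol q w).det =
      (A.updateCol p z).det * (A.updateCol q w).det
      - (A.updateCol q z).det * (A.updateCol p w).det := by
  have h1 := Matrix.mulVec_cramer A z
  have h2 : A.det * ((A.updateCol p z).updateCol q w).det
      = (((A.updateCol q w).updateCol p (A.det • z))).det := by
    rw [Matrix.det_updateCol_smul, Matrix.updateCol_comm _ hpq]
  rw [h2, ← h1]
  have h3 : A.mulVec (A.cramer z) = ∑ j, A.cramer z j • (fun k => A k j) := by
    ext i; simp [Matrix.mulVec, dotProduct, mul_comm]
  have h4 : ∀ v, ((A.updateCol q w).updateCol p v).det = (A.updateCol q w).cramer v p := by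
    intro v; rw [Matrix.cramer_apply]
  rw [h4, h3, map_sum, Finset.sum_apply, ← Finset.add_sum_erase _ _ (Finset.mem_univ p),
    ← Finset.add_sum_erase _ _ (Finset.mem_erase.2 ⟨hpq.symm, Finset.mem_univ q⟩),
    Finset.sum_eq_zero]
  · simp only [← h4, Matrix.cramer_apply]
    have e1 : (A.updateCol q w).updateCol p (fun k => A k p) = A.updateCol q w := by
      ext i j; by_cases hj : j = p <;> simp [Matrix.updateCol_apply, hj, hpq]
    have e2 : ((A.updateCol q w).updateCol p (fun k => A k q)) =
        (A.updateCol p w).submatrix id (Equiv.swap p q) := by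
      ext i j
      by_cases hj : j = p
      · simp [Matrix.updateCol_apply, hj, hpq.symm]
      · by_cases hq : j = q
        · simp [Matrix.updateCol_apply, hq, hpq.symm]
        · simp [Matrix.updateCol_apply, hj, hq, Equiv.swap_apply_of_ne_of_ne hj hq]
    rw [Matrix.det_updateCol_smul, Matrix.det_updateCol_smul, e1, e2, Matrix.det_permute', Equiv.Perm.sign_swap hpq]
    push_cast; ring
  · intro j hj
    simp only [Finset.mem_erase, Finset.mem_univ, and_true] at hj
    rw [map_smul, Pi.smul_apply, ← h4,
      Matrix.det_zero_of_column_eq (i := p) (j := j) (Ne.symm hj.2), smul_zero]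
    intro k
    simp [Matrix.updateCol_apply, hj.1, hj.2]

lemma Wd_plucker {n : ℕ} (M : ℕ → ℝ) (a : Fin n → ℕ) {p q : Fin n} (hpq : p ≠ q) (z w : ℕ) :
    Wd M a * Wd M (Function.update (Function.update a p z) q w) =
      Wd M (Function.update a p z) * Wd M (Function.update a q w)
      - Wd M (Function.update a q z) * Wd M (Function.update a p w) := by
  have key : ∀ (a : Fin n → ℕ) p z, (Matrix.of fun i j : Fin n => M (i + Function.update a p z j))
     = (Matrix.of fun i j : Fin n => M (i + a j)).updateCol p (fun i => M (i + z)) := by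
    intro a p z; ext i j
    by_cases hj : j = p <;> simp [Matrix.updateCol_apply, hj]
  unfold Wd
  rw [key, key, key, key, key]
  exact plucker _ hpq _ _

def Fr (r : ℕ) (M : ℕ → ℝ) (a b c d : ℕ) : ℝ :=
  Wd M (Fin.append (fun i : Fin r => (i : ℕ)) ![r + a, r + b, r + c, r + d])

lemma append_upd (r : ℕ) (p : Fin r → ℕ) (u : Fin 4 → ℕ) (j : Fin 4) (x : ℕ) :
    Function.update (Fin.append p u) (Fin.natAdd r j) x = Fin.append p (Function.update u j x) := by
  ext i
  refine Fin.addCases (fun i => ?_) (fun i => ?_) i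
  · rw [Function.update_of_ne]
    · simp
    · intro h
      have := congrArg Fin.val h
      simp at this
      have := i.2
      omega
  · by_cases hi : i = j
    · subst hi; simp
    · rw [Function.update_of_ne]
      · simp [hi]
      · intro h
        exact hi (by simpa using h)

lemma vupd0 (a b c d x : ℕ) : Function.update ![a, b, c, d] 0 x = ![x, b, c, d] := by
  ext i; fin_cases i <;> rfl
lemma vupd1 (a b c d x : ℕ) : Function.update ![a, b, c, d] 1 x = ![a, x, c, d] := by
  ext i; fin_cases i <;> rfl
lemma vupd2 (a b c d x : ℕ) : Function.update ![a, b, c, d] 2 x = ![a, b, x, d] := by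
  ext i; fin_cases i <;> rfl
lemma vupd3 (a b c d x : ℕ) : Function.update ![a, b, c, d] 3 x = ![a, b, c, x] := by
  ext i; fin_cases i <;> rfl

lemma Fr_deriv (r : ℕ) (M : ℕ → ℝ → ℝ) (k : ℕ) (s : ℝ)
    (h : ∀ a, HasDerivAt (M a) (M (a + k) s) s) (a b c d : ℕ)
    (hk0 : 0 < k) (hk : ∀ e < k, e = a ∨ e = b ∨ e = c ∨ e = d) :
    HasDerivAt (fun x => Fr r (fun b => M b x) a b c d)
      (Fr r (fun b => M b s) (a + k) b c d + Fr r (fun b => M b s) a (b + k) c d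
        + Fr r (fun b => M b s) a b (c + k) d + Fr r (fun b => M b s) a b c (d + k)) s := by
  refine (Wd_deriv M k s h _).congr_deriv ?_
  rw [Fin.sum_univ_add, Finset.sum_eq_zero, zero_add, Fin.sum_univ_four]
  · simp only [append_upd, Fin.append_right]
    rw [vupd0, vupd1, vupd2, vupd3]
    simp [Fr, add_assoc]
  · intro i _
    have hne : ∀ j : Fin 4, Fin.castAdd 4 i ≠ Fin.natAdd r j := by
      intro j hj
      have := congrArg Fin.val hj
      simp at this
      have := i.2
      omega
    by_cases hi : (i : ℕ) + k < r
    · refine Wd_zero _ _ (i := Fin.castAdd 4 i) (j := Fin.castAdd 4 ⟨i + k, hi⟩) ?_ ?_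
      · intro hj
        have := congrArg Fin.val hj
        simp at this
        omega
      · rw [Function.update_self, Function.update_of_ne]
        · rw [Fin.append_left, Fin.append_left]
        · intro hj
          have := congrArg Fin.val hj
          simp at this
          omega
    · have := i.2
      have key : ∃ j : Fin 4, ![r + a, r + b, r + c, r + d] j = i + k := by
        rcases hk (i + k - r) (by omega) with h | h | h | h
        · exact ⟨0, by simp; omega⟩
        · exact ⟨1, by simp; omega⟩
        · exact ⟨2, by simp; omega⟩
        · exact ⟨3, by simp; omega⟩
      obtain ⟨j, hj⟩ := key
      refine Wd_zero _ _ (i := Fin.castAdd 4 i) (j := Fin.natAdd r j) (hne j) ?_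
      rw [Function.update_self, Function.update_of_ne (hne j).symm]
      simp [hj]

lemma Fr_zero (r : ℕ) (M : ℕ → ℝ) (a b c d : ℕ)
    (h : a = b ∨ a = c ∨ a = d ∨ b = c ∨ b = d ∨ c = d) : Fr r M a b c d = 0 := by
  have hne : ∀ i j : Fin 4, i ≠ j → Fin.natAdd r i ≠ Fin.natAdd r j := by
    intro i j h; simpa using h
  rcases h with h | h | h | h | h | h
  · exact Wd_zero _ _ (hne 0 1 (by decide)) (by simp [h])
  · exact Wd_zero _ _ (hne 0 2 (by decide)) (by simp [h])
  · exact Wd_zero _ _ (hne 0 3 (by decide)) (by simp [h])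
  · exact Wd_zero _ _ (hne 1 2 (by decide)) (by simp [h])
  · exact Wd_zero _ _ (hne 1 3 (by decide)) (by simp [h])
  · exact Wd_zero _ _ (hne 2 3 (by decide)) (by simp [h])

lemma Fr_swap_aux (r : ℕ) (M : ℕ → ℝ) (u v : Fin 4 → ℕ) (i j : Fin 4) (hij : i ≠ j)
    (h : v = u ∘ Equiv.swap i j) (p : Fin r → ℕ) :
    Wd M (Fin.append p v) = - Wd M (Fin.append p u) := by
  refine Wd_swap M _ _ (i := Fin.natAdd r i) (j := Fin.natAdd r j) (by simpa using hij) ?_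
  subst h
  ext x
  refine Fin.addCases (fun x => ?_) (fun x => ?_) x
  · have hne : ∀ j : Fin 4, Fin.castAdd 4 x ≠ Fin.natAdd r j := by
      intro j hj
      have := congrArg Fin.val hj
      simp at this
      have := x.2
      omega
    simp [Equiv.swap_apply_of_ne_of_ne (hne i) (hne j)]
  · by_cases h1 : x = i
    · subst h1; simp
    · by_cases h2 : x = j
      · subst h2; simp
      · rw [Function.comp_apply, Equiv.swap_apply_of_ne_of_ne (by simpa using h1)
          (by simpa using h2)]
        simp [Equiv.swap_apply_of_ne_of_ne h1 h2]

lemma Fr_swap01 (r : ℕ) (M : ℕ → ℝ) (a b c d : ℕ) : Fr r M a b c d = - Fr r M b a c d :=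
  Fr_swap_aux r M _ _ 0 1 (by decide) (by ext i; fin_cases i <;> rfl) _
lemma Fr_swap12 (r : ℕ) (M : ℕ → ℝ) (a b c d : ℕ) : Fr r M a b c d = - Fr r M a c b d :=
  Fr_swap_aux r M _ _ 1 2 (by decide) (by ext i; fin_cases i <;> rfl) _
lemma Fr_swap23 (r : ℕ) (M : ℕ → ℝ) (a b c d : ℕ) : Fr r M a b c d = - Fr r M a b d c :=
  Fr_swap_aux r M _ _ 2 3 (by decide) (by ext i; fin_cases i <;> rfl) _

lemma Fr_plucker (r : ℕ) (M : ℕ → ℝ) :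
    Fr r M 0 1 2 3 * Fr r M 0 1 4 5 - Fr r M 0 1 2 4 * Fr r M 0 1 3 5
      + Fr r M 0 1 2 5 * Fr r M 0 1 3 4 = 0 := by
  have := Wd_plucker M (Fin.append (fun i : Fin r => (i : ℕ)) ![r + 0, r + 1, r + 2, r + 3])
    (p := Fin.natAdd r 2) (q := Fin.natAdd r 3) (by simp) (r + 4) (r + 5)
  simp only [append_upd, vupd2, vupd3] at this
  change Fr r M 0 1 2 3 * Fr r M 0 1 4 5 = Fr r M 0 1 4 3 * Fr r M 0 1 2 5
    - Fr r M 0 1 2 4 * Fr r M 0 1 5 3 at this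
  rw [Fr_swap23 r M 0 1 4 3, Fr_swap23 r M 0 1 5 3] at this
  linear_combination this

/-- The derivative hypotheses on moments. -/
def MomData (m : ℕ → ℝ → ℝ → ℝ → ℝ) : Prop :=
  (∀ a x y z, HasDerivAt (fun s => m a s y z) (m (a + 1) x y z) x) ∧
  (∀ a x y z, HasDerivAt (fun s => m a x s z) (m (a + 2) x y z) y) ∧
  (∀ a x y z, HasDerivAt (fun s => m a x y s) (m (a + 3) x y z) z)

lemma kp_of_states {A B C D E H J K L P Q R : ℝ → ℝ → ℝ → ℝ}
    (hA1 : ∀ x y z, HasDerivAt (fun s => A s y z) (B x y z) x)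
    (hB1 : ∀ x y z, HasDerivAt (fun s => B s y z) (C x y z + D x y z) x)
    (hC1 : ∀ x y z, HasDerivAt (fun s => C s y z) (E x y z + H x y z) x)
    (hD1 : ∀ x y z, HasDerivAt (fun s => D s y z) (H x y z + J x y z) x)
    (hE1 : ∀ x y z, HasDerivAt (fun s => E s y z) (K x y z + L x y z) x)
    (hH1 : ∀ x y z, HasDerivAt (fun s => H s y z) (L x y z + P x y z + Q x y z) x)
    (hJ1 : ∀ x y z, HasDerivAt (fun s => J s y z) (Q x y z + R x y z) x)
    (hA2 : ∀ x y z, HasDerivAt (fun s => A x s z) (C x y z - D x y z) y)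
    (hC2 : ∀ x y z, HasDerivAt (fun s => C x s z) (K x y z + P x y z - Q x y z) y)
    (hD2 : ∀ x y z, HasDerivAt (fun s => D x s z) (L x y z - P x y z - R x y z) y)
    (hA3 : ∀ x y z, HasDerivAt (fun s => A x y s) (E x y z - H x y z + J x y z) z)
    (hpl : ∀ x y z, A x y z * P x y z - B x y z * H x y z + C x y z * D x y z = 0) :
    KPdata A := by
  refine ⟨B, fun x y z => C x y z + D x y z,
    fun x y z => (E x y z + H x y z) + (H x y z + J x y z),
    fun x y z => ((K x y z + L x y z) + (L x y z + P x y z + Q x y z)) +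
      ((L x y z + P x y z + Q x y z) + (Q x y z + R x y z)),
    fun x y z => C x y z - D x y z,
    fun x y z => (K x y z + P x y z - Q x y z) - (L x y z - P x y z - R x y z),
    fun x y z => E x y z - H x y z + J x y z,
    fun x y z => (K x y z + L x y z) - (L x y z + P x y z + Q x y z) + (Q x y z + R x y z),
    hA1, hB1, ?_, ?_, hA2, ?_, hA3, ?_, ?_⟩
  · exact fun x y z => (hC1 x y z).fun_add (hD1 x y z)
  · exact fun x y z => ((hE1 x y z).fun_add (hH1 x y z)).fun_add ((hH1 x y z).fun_add (hJ1 x y z))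
  · exact fun x y z => (hC2 x y z).fun_sub (hD2 x y z)
  · exact fun x y z => ((hE1 x y z).fun_sub (hH1 x y z)).fun_add (hJ1 x y z)
  · intro x y z
    linear_combination 12 * hpl x y z

lemma kp_ge4 (r : ℕ) (m : ℕ → ℝ → ℝ → ℝ → ℝ) (hm : MomData m) :
    KPdata (fun x y z => Fr r (fun b => m b x y z) 0 1 2 3) := by
  obtain ⟨m1, m2, m3⟩ := hm
  have d1 : ∀ a b c d x y z, (∀ e < 1, e = a ∨ e = b ∨ e = c ∨ e = d) → _ :=
    fun a b c d x y z hk => Fr_deriv r (fun b s => m b s y z) 1 x (fun b => m1 b x y z) a b c d (by norm_num) hk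
  have d2 : ∀ a b c d x y z, (∀ e < 2, e = a ∨ e = b ∨ e = c ∨ e = d) → _ :=
    fun a b c d x y z hk => Fr_deriv r (fun b s => m b x s z) 2 y (fun b => m2 b x y z) a b c d (by norm_num) hk
  have d3 : ∀ a b c d x y z, (∀ e < 3, e = a ∨ e = b ∨ e = c ∨ e = d) → _ :=
    fun a b c d x y z hk => Fr_deriv r (fun b s => m b x y s) 3 z (fun b => m3 b x y z) a b c d (by norm_num) hk
  have zz := fun (x y z : ℝ) a b c d h => Fr_zero r (fun b => m b x y z) a b c d h
  have s12 := fun (x y z : ℝ) => Fr_swap12 r (fun b => m b x y z)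
  have s01 := fun (x y z : ℝ) => Fr_swap01 r (fun b => m b x y z)
  have s23 := fun (x y z : ℝ) => Fr_swap23 r (fun b => m b x y z)
  let G := fun a b c d x y z => Fr r (fun b => m b x y z) a b c d
  refine kp_of_states (A := G 0 1 2 3) (B := G 0 1 2 4) (C := G 0 1 2 5) (D := G 0 1 3 4)
    (E := G 0 1 2 6) (H := G 0 1 3 5) (J := G 0 2 3 4) (K := G 0 1 2 7) (L := G 0 1 3 6)
    (P := G 0 1 4 5) (Q := G 0 2 3 5) (R := G 1 2 3 4) ?_ ?_ ?_ ?_ ?_ ?_ ?_ ?_ ?_ ?_ ?_ ?_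
  iterate 7
    · intro x y z
      refine (d1 _ _ _ _ x y z (by omega)).congr_deriv ?_
      norm_num [zz, G]
      try ring
  · intro x y z
    refine (d2 _ _ _ _ x y z (by omega)).congr_deriv ?_
    norm_num [zz, G]
    linear_combination s23 x y z 0 1 4 3
  · intro x y z
    refine (d2 _ _ _ _ x y z (by omega)).congr_deriv ?_
    norm_num [zz, G]
    linear_combination s12 x y z 0 3 2 5
  · intro x y z
    refine (d2 _ _ _ _ x y z (by omega)).congr_deriv ?_
    norm_num [zz, G]
    linear_combination s01 x y z 2 1 3 4 + s23 x y z 0 1 5 4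
  · intro x y z
    refine (d3 _ _ _ _ x y z (by omega)).congr_deriv ?_
    norm_num [zz, G]
    linear_combination s23 x y z 0 1 5 3 + s12 x y z 0 4 2 3 - s23 x y z 0 2 4 3
  · intro x y z
    exact Fr_plucker r _

lemma Wd3_deriv (M : ℕ → ℝ → ℝ) (k : ℕ) (s : ℝ)
    (h : ∀ a, HasDerivAt (M a) (M (a + k) s) s) (a b c : ℕ) :
    HasDerivAt (fun x => Wd (fun b => M b x) ![a, b, c])
      (Wd (fun b => M b s) ![a + k, b, c] + Wd (fun b => M b s) ![a, b + k, c]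
        + Wd (fun b => M b s) ![a, b, c + k]) s := by
  refine (Wd_deriv M k s h _).congr_deriv ?_
  rw [Fin.sum_univ_three]
  congr 3 <;> (congr 1; ext i; fin_cases i <;> rfl)

lemma Wd2_deriv (M : ℕ → ℝ → ℝ) (k : ℕ) (s : ℝ)
    (h : ∀ a, HasDerivAt (M a) (M (a + k) s) s) (a b : ℕ) :
    HasDerivAt (fun x => Wd (fun b => M b x) ![a, b])
      (Wd (fun b => M b s) ![a + k, b] + Wd (fun b => M b s) ![a, b + k]) s := by
  refine (Wd_deriv M k s h _).congr_deriv ?_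
  rw [Fin.sum_univ_two]
  congr 2 <;> (ext i; fin_cases i <;> rfl)

lemma kp_3 (m : ℕ → ℝ → ℝ → ℝ → ℝ) (hm : MomData m) :
    KPdata (fun x y z => Wd (fun b => m b x y z) ![0, 1, 2]) := by
  obtain ⟨m1, m2, m3⟩ := hm
  have d1 := fun a b c x y z => Wd3_deriv (fun b s => m b s y z) 1 x (fun b => m1 b x y z) a b c
  have d2 := fun a b c x y z => Wd3_deriv (fun b s => m b x s z) 2 y (fun b => m2 b x y z) a b c
  have d3 := fun a b c x y z => Wd3_deriv (fun b s => m b x y s) 3 z (fun b => m3 b x y z) a b c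
  let G := fun b c d x y z => Wd (fun b => m b x y z) ![b, c, d]
  refine kp_of_states (A := G 0 1 2) (B := G 0 1 3) (C := G 0 1 4) (D := G 0 2 3)
    (E := G 0 1 5) (H := G 0 2 4) (J := G 1 2 3) (K := G 0 1 6) (L := G 0 2 5)
    (P := G 0 3 4) (Q := G 1 2 4) (R := fun _ _ _ => 0) ?_ ?_ ?_ ?_ ?_ ?_ ?_ ?_ ?_ ?_ ?_ ?_
  iterate 7
    · intro x y z
      refine (d1 _ _ _ x y z).congr_deriv ?_
      simp [G, Wd, Matrix.det_fin_three]
      try ring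
  iterate 3
    · intro x y z
      refine (d2 _ _ _ x y z).congr_deriv ?_
      simp [G, Wd, Matrix.det_fin_three]
      try ring
  · intro x y z
    refine (d3 _ _ _ x y z).congr_deriv ?_
    simp [G, Wd, Matrix.det_fin_three]
    try ring
  · intro x y z
    simp [G, Wd, Matrix.det_fin_three]
    ring

lemma kp_2 (m : ℕ → ℝ → ℝ → ℝ → ℝ) (hm : MomData m) :
    KPdata (fun x y z => Wd (fun b => m b x y z) ![0, 1]) := by
  obtain ⟨m1, m2, m3⟩ := hm
  have d1 := fun a b x y z => Wd2_deriv (fun b s => m b s y z) 1 x (fun b => m1 b x y z) a b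
  have d2 := fun a b x y z => Wd2_deriv (fun b s => m b x s z) 2 y (fun b => m2 b x y z) a b
  have d3 := fun a b x y z => Wd2_deriv (fun b s => m b x y s) 3 z (fun b => m3 b x y z) a b
  let G := fun c d x y z => Wd (fun b => m b x y z) ![c, d]
  refine kp_of_states (A := G 0 1) (B := G 0 2) (C := G 0 3) (D := G 1 2)
    (E := G 0 4) (H := G 1 3) (J := fun _ _ _ => 0) (K := G 0 5) (L := G 1 4)
    (P := G 2 3) (Q := fun _ _ _ => 0) (R := fun _ _ _ => 0) ?_ ?_ ?_ ?_ ?_ ?_ ?_ ?_ ?_ ?_ ?_ ?_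
  iterate 6
    · intro x y z
      refine (d1 _ _ x y z).congr_deriv ?_
      simp [G, Wd, Matrix.det_fin_two]
      try ring
  · intro x y z
    simpa using hasDerivAt_const x (0 : ℝ)
  iterate 3
    · intro x y z
      refine (d2 _ _ x y z).congr_deriv ?_
      simp [G, Wd, Matrix.det_fin_two]
      try ring
  · intro x y z
    refine (d3 _ _ x y z).congr_deriv ?_
    simp [G, Wd, Matrix.det_fin_two]
    try ring
  · intro x y z
    simp [G, Wd, Matrix.det_fin_two]
    ring

lemma kp_1 (m : ℕ → ℝ → ℝ → ℝ → ℝ) (hm : MomData m) : KPdata (m 0) := by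
  obtain ⟨m1, m2, m3⟩ := hm
  exact ⟨m 1, m 2, m 3, m 4, m 2, m 4, m 3, m 4, m1 0, m1 1, m1 2, m1 3, m2 0, m2 2, m3 0, m1 3,
    fun x y z => by ring⟩

lemma kp_all (n : ℕ) (hn : 1 ≤ n) (m : ℕ → ℝ → ℝ → ℝ → ℝ) (hm : MomData m) :
    KPdata (fun x y z => Wd (n := n) (fun b => m b x y z) (fun i => (i : ℕ))) := by
  obtain rfl | rfl | rfl | ⟨r, rfl⟩ : n = 1 ∨ n = 2 ∨ n = 3 ∨ ∃ r, n = r + 4 := by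
    by_cases h : 4 ≤ n
    · exact Or.inr (Or.inr (Or.inr ⟨n - 4, by omega⟩))
    · omega
  · simpa [Wd] using kp_1 m hm
  · convert kp_2 m hm using 4
    congr 1
    ext i; fin_cases i <;> rfl
  · convert kp_3 m hm using 4
    congr 1
    ext i; fin_cases i <;> rfl
  · convert kp_ge4 r m hm using 4
    unfold Fr
    congr 1
    ext i
    refine Fin.addCases (fun x => ?_) (fun x => ?_) i
    · simp
    · fin_cases x <;> simp

def mom (I : Set ℝ) (ρ : ℝ → ℝ) (a : ℕ) (t₁ t₂ t₃ : ℝ) : ℝ :=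
  ∫ z in I, z ^ a * (Real.exp (t₁ * z + t₂ * z ^ 2 + t₃ * z ^ 3) * ρ z)

lemma deriv_exp_int {I : Set ℝ} (hI : IsCompact I) {g h : ℝ → ℝ} (hg : Continuous g)
    (hh : ContinuousOn h I) (s : ℝ) :
    HasDerivAt (fun s => ∫ z in I, Real.exp (s * g z) * h z)
      (∫ z in I, g z * (Real.exp (s * g z) * h z)) s := by
  have hc : ∀ s : ℝ, ContinuousOn (fun z => Real.exp (s * g z) * h z) I := fun s =>
    (by fun_prop : Continuous fun z => Real.exp (s * g z)).continuousOn.mul hh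
  have hc' : ∀ s : ℝ, ContinuousOn (fun z => g z * (Real.exp (s * g z) * h z)) I := fun s =>
    hg.continuousOn.mul (hc s)
  obtain ⟨K, hK⟩ := hI.exists_bound_of_continuousOn hg.continuousOn
  obtain ⟨H, hH⟩ := hI.exists_bound_of_continuousOn hh
  refine (hasDerivAt_integral_of_dominated_loc_of_deriv_le (μ := volume.restrict I)
    (F := fun s z => Real.exp (s * g z) * h z)
    (F' := fun s z => g z * (Real.exp (s * g z) * h z))
    (bound := fun _ => K * (Real.exp ((|s| + 1) * K) * H))
    (Metric.ball_mem_nhds s one_pos) ?_ ?_ ?_ ?_ ?_ ?_).2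
  · exact Eventually.of_forall fun s => (hc s).aestronglyMeasurable hI.measurableSet
  · exact (hc s).integrableOn_compact hI
  · exact (hc' s).aestronglyMeasurable hI.measurableSet
  · refine (ae_restrict_iff' hI.measurableSet).2 (Eventually.of_forall fun z hz x hx => ?_)
    have h1 := hK z hz
    have h2 := hH z hz
    have hx' : |x| ≤ |s| + 1 := by
      rw [Metric.mem_ball, Real.dist_eq] at hx
      have := abs_sub_abs_le_abs_sub x s
      linarith
    rw [norm_mul, norm_mul, Real.norm_eq_abs (Real.exp _), Real.abs_exp]
    have hK0 : 0 ≤ K := (norm_nonneg _).trans h1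
    have : x * g z ≤ (|s| + 1) * K := by
      refine (le_abs_self _).trans ?_
      rw [abs_mul]
      exact mul_le_mul hx' h1 (abs_nonneg _) (by positivity)
    gcongr
  · exact continuousOn_const.integrableOn_compact hI
  · refine Eventually.of_forall fun z x _ => ?_
    have := (((hasDerivAt_id x).mul_const (g z)).exp).mul_const (h z)
    refine this.congr_deriv ?_
    simp; ring

lemma mom_data {I : Set ℝ} (hI : IsCompact I) {ρ : ℝ → ℝ} (hρ : ContinuousOn ρ I) :
    MomData (mom I ρ) := by
  unfold MomData mom
  refine ⟨fun a x y z => ?_, fun a x y z => ?_, fun a x y z => ?_⟩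
  · have := deriv_exp_int hI (g := fun w => w)
      (h := fun w => w ^ a * (Real.exp (y * w ^ 2 + z * w ^ 3) * ρ w)) (by fun_prop)
      (by refine ContinuousOn.mul (by fun_prop) (ContinuousOn.mul (by fun_prop) hρ)) x
    convert this using 1
    · ext s; congr 1; ext w; rw [add_assoc, Real.exp_add]; ring
    · congr 1; ext w; rw [add_assoc, Real.exp_add]; ring
  · have := deriv_exp_int hI (g := fun w => w ^ 2)
      (h := fun w => w ^ a * (Real.exp (x * w + z * w ^ 3) * ρ w)) (by fun_prop)
      (by refine ContinuousOn.mul (by fun_prop) (ContinuousOn.mul (by fun_prop) hρ)) y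
    convert this using 1
    · ext s; congr 1; ext w; rw [add_right_comm, Real.exp_add]; ring
    · congr 1; ext w; rw [add_right_comm, Real.exp_add]; ring
  · have := deriv_exp_int hI (g := fun w => w ^ 3)
      (h := fun w => w ^ a * (Real.exp (x * w + y * w ^ 2) * ρ w)) (by fun_prop)
      (by refine ContinuousOn.mul (by fun_prop) (ContinuousOn.mul (by fun_prop) hρ)) z
    convert this using 1
    · ext s; congr 1; ext w; rw [Real.exp_add]; ring
    · congr 1; ext w; rw [Real.exp_add]; ring

lemma vdm_sq {n : ℕ} (z : Fin n → ℝ) : vdm z ^ 2 = (Matrix.vandermonde z).det ^ 2 := by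
  rw [Matrix.det_vandermonde, vdm, ← Finset.prod_pow, ← Finset.prod_pow]
  refine Finset.prod_congr rfl fun i _ => ?_
  rw [← Finset.prod_pow, ← Finset.prod_pow]
  refine Finset.prod_congr rfl fun j _ => ?_
  ring

lemma det_sq_expand {n : ℕ} (z : Fin n → ℝ) (w : ℝ → ℝ) :
    vdm z ^ 2 * ∏ k, w (z k) = ∑ σ : Equiv.Perm (Fin n), ∑ κ : Equiv.Perm (Fin n),
      (((Equiv.Perm.sign σ : ℤ) : ℝ) * ((Equiv.Perm.sign κ : ℤ) : ℝ)) *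
        ∏ k, (z k ^ ((σ k : ℕ) + (κ k : ℕ)) * w (z k)) := by
  rw [vdm_sq, sq, ← Matrix.det_transpose, Matrix.det_apply', Finset.sum_mul_sum, Finset.sum_mul]
  refine Finset.sum_congr rfl fun σ _ => ?_
  rw [Finset.sum_mul]
  refine Finset.sum_congr rfl fun κ _ => ?_
  simp only [Matrix.transpose_apply, Matrix.vandermonde_apply, Finset.prod_mul_distrib, pow_add]
  ring

lemma tau_integrand_int {I : Set ℝ} (hI : IsCompact I) {w : ℝ → ℝ}
    (hw : ContinuousOn w I) (n : ℕ) (e : Fin n → ℕ) :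
    Integrable (fun z : Fin n → ℝ => ∏ k, (z k ^ e k * w (z k)))
      (Measure.pi fun _ : Fin n => (volume.restrict I : Measure ℝ)) := by
  have : ∀ k : Fin n, Integrable (fun x => x ^ e k * w x) (volume.restrict I) := fun k =>
    ContinuousOn.integrableOn_compact hI (ContinuousOn.mul (by fun_prop) hw)
  exact Integrable.fintype_prod this

lemma hankel_sum {n : ℕ} (M : ℕ → ℝ) :
    ∑ σ : Equiv.Perm (Fin n), ∑ κ : Equiv.Perm (Fin n),
      (((Equiv.Perm.sign σ : ℤ) : ℝ) * ((Equiv.Perm.sign κ : ℤ) : ℝ)) *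
        ∏ k, M ((σ k : ℕ) + (κ k : ℕ)) = n.factorial * Wd (n := n) M (fun i => (i : ℕ)) := by
  have : ∀ κ : Equiv.Perm (Fin n), ∑ σ : Equiv.Perm (Fin n),
      (((Equiv.Perm.sign σ : ℤ) : ℝ) * ((Equiv.Perm.sign κ : ℤ) : ℝ)) *
        ∏ k, M ((σ k : ℕ) + (κ k : ℕ)) = Wd (n := n) M (fun i => (i : ℕ)) := by
    intro κ
    have h := Matrix.det_permute' κ (Matrix.of fun i j : Fin n => M (i + (j : ℕ)))
    have hs : ((Equiv.Perm.sign κ : ℤ) : ℝ) * ((Equiv.Perm.sign κ : ℤ) : ℝ) = 1 := by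
      norm_cast
      simp
    have h2 : Wd (n := n) M (fun i => (i : ℕ)) = ((Equiv.Perm.sign κ : ℤ) : ℝ) *
      ((Matrix.of fun i j : Fin n => M (i + (j : ℕ))).submatrix id κ).det := by
      rw [h, ← mul_assoc, hs, one_mul]; rfl
    rw [h2, Matrix.det_apply', Finset.mul_sum]
    refine Finset.sum_congr rfl fun σ _ => ?_
    simp only [Matrix.submatrix_apply, Matrix.of_apply, id]
    ring
  rw [Finset.sum_comm, Finset.sum_congr rfl fun κ _ => this κ]
  simp [Fintype.card_perm]

lemma restrict_pi' (I : Set ℝ) (n : ℕ) :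
    (volume : Measure (Fin n → ℝ)).restrict (Set.univ.pi fun _ => I) =
      Measure.pi fun _ : Fin n => (volume.restrict I : Measure ℝ) := by
  rw [volume_pi, Measure.restrict_pi_pi]

lemma expw_cont {I : Set ℝ} {ρ : ℝ → ℝ} (hρ : ContinuousOn ρ I)
    (t₁ t₂ t₃ : ℝ) :
    ContinuousOn (fun x => Real.exp (t₁ * x + t₂ * x ^ 2 + t₃ * x ^ 3) * ρ x) I :=
  ContinuousOn.mul (by fun_prop) hρ

lemma tau_eq {I : Set ℝ} (hI : IsCompact I) {ρ : ℝ → ℝ} (hρ : ContinuousOn ρ I) (n : ℕ)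
    (t₁ t₂ t₃ : ℝ) :
    tau9 I ρ n t₁ t₂ t₃ =
      n.factorial * Wd (n := n) (fun b => mom I ρ b t₁ t₂ t₃) (fun i => (i : ℕ)) := by
  have hw := expw_cont hρ t₁ t₂ t₃
  rw [tau9, restrict_pi', ← hankel_sum]
  have e := fun z : Fin n → ℝ =>
    det_sq_expand z (fun x => Real.exp (t₁ * x + t₂ * x ^ 2 + t₃ * x ^ 3) * ρ x)
  simp only [e]
  rw [integral_finsetSum]
  · refine Finset.sum_congr rfl fun σ _ => ?_
    rw [integral_finsetSum]
    · refine Finset.sum_congr rfl fun κ _ => ?_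
      rw [integral_const_mul]
      congr 1
      rw [integral_fintype_prod_eq_prod (f := fun k x => x ^ ((σ k : ℕ) + (κ k : ℕ)) *
        (Real.exp (t₁ * x + t₂ * x ^ 2 + t₃ * x ^ 3) * ρ x))]
      rfl
    · intro κ _
      exact (tau_integrand_int hI hw n _).const_mul _
  · intro σ _
    exact integrable_finsetSum _ fun κ _ => (tau_integrand_int hI hw n _).const_mul _

lemma tau_int {I : Set ℝ} (hI : IsCompact I) {ρ : ℝ → ℝ} (hρ : ContinuousOn ρ I) (n : ℕ)
    (t₁ t₂ t₃ : ℝ) :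
    IntegrableOn (fun z : Fin n → ℝ => vdm z ^ 2 *
      ∏ k, (Real.exp (t₁ * z k + t₂ * z k ^ 2 + t₃ * z k ^ 3) * ρ (z k)))
      (Set.univ.pi fun _ : Fin n => I) := by
  have hw := expw_cont hρ t₁ t₂ t₃
  rw [IntegrableOn, restrict_pi']
  have e := fun z : Fin n → ℝ =>
    det_sq_expand z (fun x => Real.exp (t₁ * x + t₂ * x ^ 2 + t₃ * x ^ 3) * ρ x)
  simp only [e]
  exact integrable_finsetSum _ fun σ _ =>
    integrable_finsetSum _ fun κ _ => (tau_integrand_int hI hw n _).const_mul _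

lemma vdm_null (n : ℕ) : volume {z : Fin n → ℝ | vdm z = 0} = 0 := by
  have h : {z : Fin n → ℝ | vdm z = 0} ⊆ ⋃ i : Fin n, ⋃ j ∈ Finset.Ioi i, {z | z i = z j} := by
    intro z hz
    simp only [vdm, Set.mem_ofPred_eq, Finset.prod_eq_zero_iff, Finset.mem_univ, true_and,
      sub_eq_zero] at hz
    obtain ⟨i, j, hj, hz⟩ := hz
    simp only [Set.mem_iUnion]
    exact ⟨i, j, hj, hz⟩
  refine measure_mono_null h ?_
  refine measure_iUnion_null fun i => ?_
  refine (measure_biUnion_null_iff (Finset.countable_toSet _)).2 fun j hj => ?_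
  have hij : i ≠ j := (Finset.mem_Ioi.1 hj).ne
  let S : Submodule ℝ (Fin n → ℝ) := LinearMap.ker
    ((LinearMap.proj i : (Fin n → ℝ) →ₗ[ℝ] ℝ) - LinearMap.proj j)
  have hS : S ≠ ⊤ := by
    intro hS
    have : (Pi.single i 1 : Fin n → ℝ) ∈ S := by rw [hS]; trivial
    simp [S, LinearMap.mem_ker, hij.symm] at this
  have := Measure.addHaar_submodule volume S hS
  convert this using 2
  ext z
  simp [S, LinearMap.mem_ker, sub_eq_zero]

lemma tau_pos {I : Set ℝ} (hI : IsCompact I) {ρ : ℝ → ℝ} (hρ : ContinuousOn ρ I) (n : ℕ)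
    (hρ0 : ∀ z ∈ I, 0 ≤ ρ z)
    (hρne : ¬ (∀ᵐ z ∂(volume.restrict I), ρ z = 0)) (t₁ t₂ t₃ : ℝ) :
    0 < tau9 I ρ n t₁ t₂ t₃ := by
  have hm : MeasurableSet (Set.univ.pi fun _ : Fin n => I) :=
    MeasurableSet.univ_pi fun _ => hI.measurableSet
  rw [tau9, setIntegral_pos_iff_support_of_nonneg_ae _ (tau_int hI hρ n t₁ t₂ t₃)]
  · have hP : volume {z | z ∈ I ∧ ρ z ≠ 0} ≠ 0 := by
      intro h0
      apply hρne
      rw [ae_restrict_iff' hI.measurableSet, ae_iff]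
      convert h0 using 3
      simp
    have hsub : (Set.univ.pi fun _ : Fin n => {z | z ∈ I ∧ ρ z ≠ 0}) \ {z | vdm z = 0} ⊆
      (Function.support (fun z : Fin n → ℝ => vdm z ^ 2 *
      ∏ k, (Real.exp (t₁ * z k + t₂ * z k ^ 2 + t₃ * z k ^ 3) * ρ (z k)))) ∩
        (Set.univ.pi fun _ : Fin n => I) := by
      rintro z ⟨hz, hv⟩
      simp only [Set.mem_pi, Set.mem_univ, true_imp_iff, Set.mem_ofPred_eq] at hz hv
      refine ⟨?_, fun k _ => (hz k).1⟩
      refine mul_ne_zero (pow_ne_zero _ hv) (Finset.prod_ne_zero_iff.2 fun k _ => ?_)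
      exact mul_ne_zero (Real.exp_pos _).ne' (hz k).2
    refine lt_of_lt_of_le ?_ (measure_mono hsub)
    rw [measure_sdiff_null (vdm_null n), volume_pi_pi]
    exact pos_iff_ne_zero.2 (Finset.prod_ne_zero_iff.2 fun k _ => hP)
  · refine (ae_restrict_iff' hm).2 (Eventually.of_forall fun z hz => ?_)
    refine mul_nonneg (sq_nonneg _) (Finset.prod_nonneg fun k _ => ?_)
    exact mul_nonneg (Real.exp_pos _).le (hρ0 _ (hz k trivial))

/-- `τ > 0`, and `log τ` satisfies the first KP equation
`∂⁴_{t₁} log τ + 3 ∂²_{t₂} log τ − 4 ∂²_{t₁t₃} log τ + 6 (∂²_{t₁} log τ)² = 0`. -/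
theorem statement9 (I : Set ℝ) (ρ : ℝ → ℝ) (n : ℕ) (hn : 1 ≤ n)
    (hI : ∃ (m : ℕ) (c d : Fin m → ℝ), I = ⋃ i, Set.Icc (c i) (d i))
    (hρcont : ContinuousOn ρ I) (hρ0 : ∀ z ∈ I, 0 ≤ ρ z)
    (hρne : ¬ (∀ᵐ z ∂(volume.restrict I), ρ z = 0)) :
    (∀ t₁ t₂ t₃ : ℝ, 0 < tau9 I ρ n t₁ t₂ t₃) ∧
    ∀ t₁ t₂ t₃ : ℝ,
      iteratedDeriv 4 (fun s => Real.log (tau9 I ρ n s t₂ t₃)) t₁ +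
        3 * iteratedDeriv 2 (fun s => Real.log (tau9 I ρ n t₁ s t₃)) t₂ -
        4 * deriv (fun s₁ => deriv (fun s₃ => Real.log (tau9 I ρ n s₁ t₂ s₃)) t₃) t₁ +
        6 * (iteratedDeriv 2 (fun s => Real.log (tau9 I ρ n s t₂ t₃)) t₁) ^ 2 = 0 := by
  have hc : IsCompact I := by
    obtain ⟨m, c, d, rfl⟩ := hI
    exact isCompact_iUnion fun i => isCompact_Icc
  have hpos := tau_pos hc hρcont n hρ0 hρne
  refine ⟨hpos, ?_⟩
  have hk : KPdata (tau9 I ρ n) := by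
    have h := (kp_all n hn _ (mom_data hc hρcont)).const_mul (n.factorial : ℝ)
    have e : tau9 I ρ n = fun x y z => (n.factorial : ℝ) *
        Wd (n := n) (fun b => mom I ρ b x y z) (fun i => (i : ℕ)) := by
      funext x y z
      exact tau_eq hc hρcont n x y z
    rw [e]
    exact h
  exact hk.kp hpos

end
end
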